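/- Let m ≥ 1, let C_i : ℝⁿ → ℝ^{n_i} (i = 1,…,m) be surjective linear maps, let p_i > 0 be reals, let 𝒬 be a symmetric positive semidefinite matrix on ℝⁿ, let I ⊆ {1,…,m}, and let Q_i be symmetric positive definite matrices on ℝ^{n_i}. Suppose that for each i ∈ I the nonnegative function f_i ∈ L¹(ℝ^{n_i}) is more log-convex than g_{Q_i}, and for each j ∉ I the nonnegative function f_j ∈ L¹(ℝ^{n_j}) is more log-concave than g_{Q_j}. Then ∫_{ℝⁿ} e^{−π⟨𝒬x,x⟩} ∏_{i=1}^m f_i(C_i x)^{p_i} dx ≤ S · ∏_{i=1}^m (∫_{ℝ^{n_i}} f_i)^{p_i}, where S = sup{ (∏_{i=1}^m det(B_i)^{p_i} / det(𝒬 + ∑_{i=1}^m p_i C_iᵀ B_i C_i))^{1/2} : B_i symmetric with 0 < B_i ≤ Q_i for i ∈ I and B_j ≥ Q_j for j ∉ I }. -/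

import Mathlib

open MeasureTheory Matrix
open scoped ENNReal

noncomputable section

/-- The centered Gaussian function attached to a matrix `Q` : `g_Q(x) = exp(-π⟨Qx,x⟩)`. -/
def gaussFn {k : ℕ} (Q : Matrix (Fin k) (Fin k) ℝ) (x : Fin k → ℝ) : ℝ :=
  Real.exp (-Real.pi * (Q.mulVec x ⬝ᵥ x))

/-- A nonnegative log-convex function. -/
def LogConvexFun {k : ℕ} (h : (Fin k → ℝ) → ℝ) : Prop :=
  (∀ x, 0 ≤ h x) ∧
    ∀ x y : Fin k → ℝ, ∀ a b : ℝ, 0 ≤ a → 0 ≤ b → a + b = 1 →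
      h (a • x + b • y) ≤ h x ^ a * h y ^ b

/-- A nonnegative log-concave function. -/
def LogConcaveFun {k : ℕ} (h : (Fin k → ℝ) → ℝ) : Prop :=
  (∀ x, 0 ≤ h x) ∧
    ∀ x y : Fin k → ℝ, ∀ a b : ℝ, 0 ≤ a → 0 ≤ b → a + b = 1 →
      h x ^ a * h y ^ b ≤ h (a • x + b • y)

/-- `f` is more log-convex than `g_Q`, i.e. `f = g_Q · h` with `h` log-convex. -/
def MoreLogConvex {k : ℕ} (f : (Fin k → ℝ) → ℝ) (Q : Matrix (Fin k) (Fin k) ℝ) : Prop :=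
  ∃ h : (Fin k → ℝ) → ℝ, LogConvexFun h ∧ f = fun x => gaussFn Q x * h x

/-- `f` is more log-concave than `g_Q`, i.e. `f = g_Q · h` with `h` log-concave. -/
def MoreLogConcave {k : ℕ} (f : (Fin k → ℝ) → ℝ) (Q : Matrix (Fin k) (Fin k) ℝ) : Prop :=
  ∃ h : (Fin k → ℝ) → ℝ, LogConcaveFun h ∧ f = fun x => gaussFn Q x * h x

/-!
Replacing `(𝒬, f_j)` by approximations, one may assume that `𝒬` is positive definite and that every
`f_i` lies in the class of integrable functions which are more log-convex than `g_{R_i}` and, for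
`i ∉ I`, also more log-concave than `g_{Q_i}`. If `X` and `Y` are independent with densities
proportional to `f` and `g` in this class, then the density of `(X + Y) / √2` is in the class again.
Ball's inequality says that replacing an extremizer by its self-convolution of this kind gives
another extremizer. Extremizers exist because log-convexity makes the class compact. Iterating
`X ↦ (X + X') / √2` from an extremizer, the central limit theorem (together with compactness, which
bounds second moments) shows that some centered Gaussian is an extremizer, and a Gaussian `g_B` in
the class satisfies the constraints `B_i ≤ Q_i` and `B_j ≥ Q_j` of the supremum.
-/

open Filter Topology

/-! ### The Prékopa–Leindler inequality -/

section PrekopaLeindler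

open Set Pointwise

theorem volume_add_volume_le_volume_add_of_isCompact {K L : Set ℝ} (hK : IsCompact K)
    (hL : IsCompact L) (hK₀ : K.Nonempty) (hL₀ : L.Nonempty) :
    volume K + volume L ≤ volume (K + L) := by
  obtain ⟨k, hk, hk_max⟩ := hK.exists_isGreatest hK₀
  obtain ⟨l, hl, hl_min⟩ := hL.exists_isLeast hL₀
  have h_inter : volume ((l +ᵥ K) ∩ (k +ᵥ L)) = 0 := by
    refine measure_mono_null (t := {k + l}) ?_ (by simp)
    rintro _ ⟨⟨x, hx, rfl⟩, y, hy, hxy : k + y = l + x⟩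
    have hxk := hk_max hx
    have hly := hl_min hy
    change l + x = k + l
    linarith
  calc volume K + volume L = volume (l +ᵥ K) + volume (k +ᵥ L) := by simp
    _ = volume ((l +ᵥ K) ∪ (k +ᵥ L)) := by
      rw [← measure_union_add_inter _ (hL.vadd k).measurableSet, h_inter, add_zero]
    _ ≤ volume (K + L) := by
      refine measure_mono (union_subset ?_ ?_)
      · rintro _ ⟨x, hx, rfl⟩
        exact ⟨x, hx, l, hl, add_comm x l⟩
      · rintro _ ⟨y, hy, rfl⟩
        exact ⟨k, hk, y, hy, rfl⟩

theorem volume_add_volume_le_volume_add {A B : Set ℝ} (hA : MeasurableSet A)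
    (hB : MeasurableSet B) (hA₀ : A.Nonempty) (hB₀ : B.Nonempty) :
    volume A + volume B ≤ volume (A + B) := by
  obtain ⟨a, ha⟩ := hA₀
  obtain ⟨b, hb⟩ := hB₀
  rw [hA.measure_eq_iSup_isCompact, hB.measure_eq_iSup_isCompact]
  simp only [iSup_and']
  refine ENNReal.biSup_add_biSup_le' (p := fun K ↦ K ⊆ A ∧ IsCompact K)
    (q := fun L ↦ L ⊆ B ∧ IsCompact L) ⟨∅, by simp⟩ ⟨∅, by simp⟩ ?_
  rintro K ⟨hKA, hK⟩ L ⟨hLB, hL⟩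
  calc volume K + volume L ≤ volume (insert a K) + volume (insert b L) := by gcongr <;> simp
    _ ≤ volume (insert a K + insert b L) := volume_add_volume_le_volume_add_of_isCompact
      (hK.insert a) (hL.insert b) (insert_nonempty a K) (insert_nonempty b L)
    _ ≤ volume (A + B) := measure_mono <|
      add_subset_add (insert_subset ha hKA) (insert_subset hb hLB)

theorem ennreal_geom_mean_le_arith_mean2_weighted {a b : ℝ} (ha : 0 < a) (hb : 0 < b)
    (hab : a + b = 1) (x y : ℝ≥0∞) :
    x ^ a * y ^ b ≤ ENNReal.ofReal a * x + ENNReal.ofReal b * y := by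
  rcases eq_or_ne x ∞ with rfl | hx
  · simp [ENNReal.mul_top, ha]
  rcases eq_or_ne y ∞ with rfl | hy
  · simp [ENNReal.mul_top, hb]
  lift x to NNReal using hx
  lift y to NNReal using hy
  lift a to NNReal using ha.le
  lift b to NNReal using hb.le
  have h := NNReal.geom_mean_le_arith_mean2_weighted a b x y (by exact_mod_cast hab)
  rw [← ENNReal.coe_rpow_of_nonneg x a.coe_nonneg, ← ENNReal.coe_rpow_of_nonneg y b.coe_nonneg,
    ENNReal.ofReal_coe_nnreal, ENNReal.ofReal_coe_nnreal]
  exact_mod_cast h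

theorem lintegral_eq_lintegral_measure_ofReal_lt {α : Type*} [MeasurableSpace α] (μ : Measure α)
    {f : α → ℝ≥0∞} (hf : Measurable f) (hf_top : ∀ x, f x ≠ ∞) :
    ∫⁻ x, f x ∂μ = ∫⁻ t in Ioi (0 : ℝ), μ {x | ENNReal.ofReal t < f x} := by
  have h := lintegral_eq_lintegral_meas_lt μ (f := fun x ↦ (f x).toReal)
    (.of_forall fun x ↦ ENNReal.toReal_nonneg) hf.ennreal_toReal.aemeasurable
  simp only [ENNReal.ofReal_toReal (hf_top _)] at h
  rw [h]
  refine setLIntegral_congr_fun measurableSet_Ioi fun t ht ↦ ?_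
  simp only [ENNReal.ofReal_lt_iff_lt_toReal (le_of_lt ht) (hf_top _)]

variable {a b : ℝ}

theorem ofReal_mul_volume_add_le_volume_smul_add {A B : Set ℝ} (hA : MeasurableSet A)
    (hB : MeasurableSet B) (hA₀ : A.Nonempty) (hB₀ : B.Nonempty) (ha : 0 < a) (hb : 0 < b) :
    ENNReal.ofReal a * volume A + ENNReal.ofReal b * volume B ≤ volume (a • A + b • B) := by
  have h := volume_add_volume_le_volume_add (hA.const_smul₀ a) (hB.const_smul₀ b)
    hA₀.smul_set hB₀.smul_set
  simpa [Measure.addHaar_smul, abs_of_pos, ha, hb] using h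

theorem smul_setOf_lt_add_smul_setOf_lt_subset {f g h : ℝ → ℝ≥0∞} (ha : 0 < a) (hb : 0 < b)
    (hab : a + b = 1) (H : ∀ x y, f x ^ a * g y ^ b ≤ h (a * x + b * y)) (c : ℝ≥0∞) :
    a • {x | c < f x} + b • {x | c < g x} ⊆ {x | c < h x} := by
  rintro _ ⟨_, ⟨x, hx, rfl⟩, _, ⟨y, hy, rfl⟩, rfl⟩
  calc c < min (f x) (g y) := lt_min hx hy
    _ = min (f x) (g y) ^ a * min (f x) (g y) ^ b := by
      rw [← ENNReal.rpow_add_of_nonneg _ _ ha.le hb.le, hab, ENNReal.rpow_one]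
    _ ≤ f x ^ a * g y ^ b := by gcongr <;> simp
    _ ≤ h (a * x + b * y) := H x y

theorem ofReal_mul_volume_setOf_lt_add_le {f g h : ℝ → ℝ≥0∞} (hf : Measurable f)
    (hg : Measurable g) (ha : 0 < a) (hb : 0 < b) (hab : a + b = 1) (hf_sup : ⨆ x, f x = 1)
    (hg_sup : ⨆ x, g x = 1) (H : ∀ x y, f x ^ a * g y ^ b ≤ h (a * x + b * y)) (c : ℝ≥0∞) :
    ENNReal.ofReal a * volume {x | c < f x} + ENNReal.ofReal b * volume {x | c < g x} ≤
      volume {x | c < min (h x) 1} := by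
  rcases le_or_gt 1 c with hc | hc
  · have hf_empty : {x | c < f x} = ∅ := by
      ext x; simpa using (hf_sup ▸ le_iSup f x : f x ≤ 1).trans hc
    have hg_empty : {x | c < g x} = ∅ := by
      ext x; simpa using (hg_sup ▸ le_iSup g x : g x ≤ 1).trans hc
    simp [hf_empty, hg_empty]
  · have hf_ne : {x | c < f x}.Nonempty :=
      (lt_iSup_iff.1 (by rwa [hf_sup])).imp fun x hx ↦ hx
    have hg_ne : {x | c < g x}.Nonempty :=
      (lt_iSup_iff.1 (by rwa [hg_sup])).imp fun x hx ↦ hx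
    calc _ ≤ volume (a • {x | c < f x} + b • {x | c < g x}) :=
          ofReal_mul_volume_add_le_volume_smul_add (measurableSet_lt measurable_const hf)
            (measurableSet_lt measurable_const hg) hf_ne hg_ne ha hb
      _ ≤ volume {x | c < min (h x) 1} := measure_mono fun x hx ↦
          lt_min (smul_setOf_lt_add_smul_setOf_lt_subset ha hb hab H c hx) hc

theorem prekopa_leindler_real_of_iSup_eq_one {f g h : ℝ → ℝ≥0∞} (hf : Measurable f)
    (hg : Measurable g) (hh : Measurable h) (ha : 0 < a) (hb : 0 < b) (hab : a + b = 1)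
    (hf_sup : ⨆ x, f x = 1) (hg_sup : ⨆ x, g x = 1)
    (H : ∀ x y, f x ^ a * g y ^ b ≤ h (a * x + b * y)) :
    (∫⁻ x, f x) ^ a * (∫⁻ x, g x) ^ b ≤ ∫⁻ x, h x := by
  have ne_top {u : ℝ → ℝ≥0∞} (hu : ∀ x, u x ≤ 1) (x : ℝ) : u x ≠ ∞ :=
    ((hu x).trans_lt ENNReal.one_lt_top).ne
  have h_meas : Measurable fun t : ℝ ↦
      ENNReal.ofReal a * volume {x | ENNReal.ofReal t < f x} := by
    refine (Antitone.measurable fun s t hst ↦ measure_mono fun x hx ↦ ?_).const_mul _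
    exact (ENNReal.ofReal_le_ofReal hst).trans_lt hx
  calc (∫⁻ x, f x) ^ a * (∫⁻ x, g x) ^ b
      ≤ ENNReal.ofReal a * (∫⁻ x, f x) + ENNReal.ofReal b * ∫⁻ x, g x :=
        ennreal_geom_mean_le_arith_mean2_weighted ha hb hab _ _
    _ = ∫⁻ t in Ioi (0 : ℝ), (ENNReal.ofReal a * volume {x | ENNReal.ofReal t < f x} +
          ENNReal.ofReal b * volume {x | ENNReal.ofReal t < g x}) := by
      rw [lintegral_add_left h_meas, lintegral_const_mul' _ _ ENNReal.ofReal_ne_top,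
        lintegral_const_mul' _ _ ENNReal.ofReal_ne_top,
        ← lintegral_eq_lintegral_measure_ofReal_lt _ hf (ne_top fun x ↦ hf_sup ▸ le_iSup f x),
        ← lintegral_eq_lintegral_measure_ofReal_lt _ hg (ne_top fun x ↦ hg_sup ▸ le_iSup g x)]
    _ ≤ ∫⁻ t in Ioi (0 : ℝ), volume {x | ENNReal.ofReal t < min (h x) 1} :=
      lintegral_mono fun t ↦
        ofReal_mul_volume_setOf_lt_add_le hf hg ha hb hab hf_sup hg_sup H _
    _ = ∫⁻ x, min (h x) 1 := (lintegral_eq_lintegral_measure_ofReal_lt _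
        (hh.min measurable_const) (ne_top fun x ↦ min_le_right _ _)).symm
    _ ≤ ∫⁻ x, h x := lintegral_mono fun x ↦ min_le_left _ _

theorem prekopa_leindler_real_of_iSup_ne_top {f g h : ℝ → ℝ≥0∞} (hf : Measurable f)
    (hg : Measurable g) (hh : Measurable h) (ha : 0 < a) (hb : 0 < b) (hab : a + b = 1)
    (hf_sup : ⨆ x, f x ≠ ∞) (hg_sup : ⨆ x, g x ≠ ∞)
    (H : ∀ x y, f x ^ a * g y ^ b ≤ h (a * x + b * y)) :
    (∫⁻ x, f x) ^ a * (∫⁻ x, g x) ^ b ≤ ∫⁻ x, h x := by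
  rcases eq_or_ne (⨆ x, f x) 0 with hf₀ | hf₀
  · have hf_zero : ∀ x, f x = 0 := by simpa using hf₀
    simp [hf_zero, ha]
  rcases eq_or_ne (⨆ x, g x) 0 with hg₀ | hg₀
  · have hg_zero : ∀ x, g x = 0 := by simpa using hg₀
    simp [hg_zero, hb]
  set F := ⨆ x, f x
  set G := ⨆ x, g x
  have hF₀ : F ^ a ≠ 0 := by simp [hf₀, hf_sup]
  have hG₀ : G ^ b ≠ 0 := by simp [hg₀, hg_sup]
  have hF_top : F ^ a ≠ ∞ := ENNReal.rpow_ne_top_of_nonneg ha.le hf_sup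
  have hG_top : G ^ b ≠ ∞ := ENNReal.rpow_ne_top_of_nonneg hb.le hg_sup
  have h_scale (u v : ℝ≥0∞) :
      (F⁻¹ * u) ^ a * (G⁻¹ * v) ^ b = (F ^ a * G ^ b)⁻¹ * (u ^ a * v ^ b) := by
    rw [ENNReal.mul_rpow_of_nonneg _ _ ha.le, ENNReal.mul_rpow_of_nonneg _ _ hb.le,
      mul_mul_mul_comm, ENNReal.inv_rpow, ENNReal.inv_rpow,
      ENNReal.mul_inv (.inl hF₀) (.inl hF_top)]
  have h_norm := prekopa_leindler_real_of_iSup_eq_one (f := fun x ↦ F⁻¹ * f x)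
    (g := fun x ↦ G⁻¹ * g x) (h := fun x ↦ (F ^ a * G ^ b)⁻¹ * h x) (hf.const_mul _)
    (hg.const_mul _) (hh.const_mul _) ha hb hab
    (by rw [← ENNReal.mul_iSup, ENNReal.inv_mul_cancel hf₀ hf_sup])
    (by rw [← ENNReal.mul_iSup, ENNReal.inv_mul_cancel hg₀ hg_sup])
    fun x y ↦ by rw [h_scale]; gcongr; exact H x y
  rw [lintegral_const_mul _ hf, lintegral_const_mul _ hg, lintegral_const_mul _ hh,
    h_scale] at h_norm
  exact (ENNReal.mul_le_mul_iff_right (by simp [hF_top, hG_top, ENNReal.mul_eq_top])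
    (by simp [hF₀, hG₀])).1 h_norm

theorem tendsto_lintegral_min_natCast {α : Type*} [MeasurableSpace α] (μ : Measure α)
    {f : α → ℝ≥0∞} (hf : Measurable f) :
    Tendsto (fun N : ℕ ↦ ∫⁻ x, min (f x) N ∂μ) atTop (𝓝 (∫⁻ x, f x ∂μ)) := by
  refine lintegral_tendsto_of_tendsto_of_monotone
    (fun N ↦ (hf.min measurable_const).aemeasurable)
    (.of_forall fun x N M hNM ↦ min_le_min le_rfl (by exact_mod_cast hNM))
    (.of_forall fun x ↦ ?_)
  simpa using (tendsto_const_nhds (x := f x)).min ENNReal.tendsto_nat_nhds_top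

theorem prekopa_leindler_real {f g h : ℝ → ℝ≥0∞} (hf : Measurable f)
    (hg : Measurable g) (hh : Measurable h) (ha : 0 < a) (hb : 0 < b) (hab : a + b = 1)
    (H : ∀ x y, f x ^ a * g y ^ b ≤ h (a * x + b * y)) :
    (∫⁻ x, f x) ^ a * (∫⁻ x, g x) ^ b ≤ ∫⁻ x, h x := by
  have iSup_min_ne_top (u : ℝ → ℝ≥0∞) (N : ℕ) : ⨆ x, min (u x) N ≠ ∞ :=
    ((iSup_le fun x ↦ min_le_right _ _).trans_lt (ENNReal.natCast_lt_top N)).ne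
  have h_trunc (N : ℕ) : (∫⁻ x, min (f x) N) ^ a * (∫⁻ x, min (g x) N) ^ b ≤ ∫⁻ x, h x :=
    prekopa_leindler_real_of_iSup_ne_top (hf.min measurable_const) (hg.min measurable_const)
      hh ha hb hab (iSup_min_ne_top f N) (iSup_min_ne_top g N)
      fun x y ↦ le_trans (by gcongr <;> exact min_le_left _ _) (H x y)
  by_cases hf₀ : ∫⁻ x, f x = 0
  · simp [hf₀, ha]
  by_cases hg₀ : ∫⁻ x, g x = 0
  · simp [hg₀, hb]
  exact le_of_tendsto' (ENNReal.Tendsto.mul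
    ((tendsto_lintegral_min_natCast _ hf).ennrpow_const a) (.inl (by simp [hf₀, ha.not_gt]))
    ((tendsto_lintegral_min_natCast _ hg).ennrpow_const b) (.inl (by simp [hg₀, hb.not_gt])))
    h_trunc

theorem prekopa_leindler {k : ℕ} {f g h : (Fin k → ℝ) → ℝ≥0∞} (hf : Measurable f)
    (hg : Measurable g) (hh : Measurable h) (ha : 0 < a) (hb : 0 < b) (hab : a + b = 1)
    (H : ∀ x y, f x ^ a * g y ^ b ≤ h (a • x + b • y)) :
    (∫⁻ x, f x) ^ a * (∫⁻ x, g x) ^ b ≤ ∫⁻ x, h x := by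
  induction k with
  | zero =>
    have h_dirac (u : (Fin 0 → ℝ) → ℝ≥0∞) : ∫⁻ x, u x = u 0 := by
      simp [volume_pi, lintegral_unique, Subsingleton.elim default ![]]
    simpa [h_dirac] using H 0 0
  | succ k ih =>
    let e := MeasurableEquiv.piFinSuccAbove (fun _ : Fin (k + 1) ↦ ℝ) 0
    have he : MeasurePreserving e.symm :=
      (volume_preserving_piFinSuccAbove (fun _ : Fin (k + 1) ↦ ℝ) 0).symm
    have lintegral_eq {u : (Fin (k + 1) → ℝ) → ℝ≥0∞} (hu : Measurable u) :
        ∫⁻ x, u x = ∫⁻ t : ℝ, ∫⁻ y : Fin k → ℝ, u (e.symm (t, y)) := by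
      rw [← he.lintegral_comp hu, Measure.volume_eq_prod,
        lintegral_prod (fun z ↦ u (e.symm z)) (hu.comp e.symm.measurable).aemeasurable]
    have meas {u : (Fin (k + 1) → ℝ) → ℝ≥0∞} (hu : Measurable u) :
        Measurable fun z ↦ u (e.symm z) := hu.comp e.symm.measurable
    rw [lintegral_eq hf, lintegral_eq hg, lintegral_eq hh]
    refine prekopa_leindler_real (meas hf).lintegral_prod_right' (meas hg).lintegral_prod_right'
      (meas hh).lintegral_prod_right' ha hb hab fun s t ↦ ?_
    refine ih ((meas hf).comp measurable_prodMk_left) ((meas hg).comp measurable_prodMk_left)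
      ((meas hh).comp measurable_prodMk_left) fun x y ↦ ?_
    convert H (e.symm (s, x)) (e.symm (t, y)) using 2
    ext i
    refine Fin.cases ?_ (fun j ↦ ?_) i <;> simp [e, MeasurableEquiv.piFinSuccAbove]

end PrekopaLeindler

/-! ### Centered Gaussian functions -/

section Gaussian

variable {k : ℕ}

theorem gaussFn_pos (Q : Matrix (Fin k) (Fin k) ℝ) (x : Fin k → ℝ) : 0 < gaussFn Q x :=
  Real.exp_pos _

@[fun_prop]
theorem continuous_gaussFn (Q : Matrix (Fin k) (Fin k) ℝ) : Continuous (gaussFn Q) := by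
  unfold gaussFn
  fun_prop

theorem gaussFn_le_one {Q : Matrix (Fin k) (Fin k) ℝ} (hQ : Q.PosSemidef) (x : Fin k → ℝ) :
    gaussFn Q x ≤ 1 := by
  have h_form : 0 ≤ Q *ᵥ x ⬝ᵥ x := by
    simpa [dotProduct_comm] using hQ.dotProduct_mulVec_nonneg x
  exact Real.exp_le_one_iff.2 (by nlinarith [Real.pi_pos])

theorem gaussFn_neg (Q : Matrix (Fin k) (Fin k) ℝ) (x : Fin k → ℝ) :
    gaussFn Q (-x) = gaussFn Q x := by
  simp [gaussFn, mulVec_neg]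

theorem gaussFn_add_mul_gaussFn_sub (Q : Matrix (Fin k) (Fin k) ℝ) (x w : Fin k → ℝ) :
    gaussFn Q (x + w) * gaussFn Q (x - w) = (gaussFn Q x * gaussFn Q w) ^ 2 := by
  simp only [gaussFn, ← Real.exp_add, ← Real.exp_nat_mul, mulVec_add, mulVec_sub,
    add_dotProduct, dotProduct_add, sub_dotProduct, dotProduct_sub]
  congr 1
  push_cast
  ring

theorem gaussFn_add_mul_gaussFn_sub_of_sq_add_sq_eq_one (Q : Matrix (Fin k) (Fin k) ℝ)
    {c s : ℝ} (hcs : c ^ 2 + s ^ 2 = 1) (x w : Fin k → ℝ) :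
    gaussFn Q (c • x + s • w) * gaussFn Q (s • x - c • w) = gaussFn Q x * gaussFn Q w := by
  simp only [gaussFn, ← Real.exp_add, mulVec_add, mulVec_sub, mulVec_smul, add_dotProduct,
    dotProduct_add, sub_dotProduct, dotProduct_sub, smul_dotProduct, dotProduct_smul, smul_eq_mul]
  congr 1
  linear_combination (-Real.pi * (Q *ᵥ x ⬝ᵥ x + Q *ᵥ w ⬝ᵥ w)) * hcs

theorem integral_comp_mulVec {E : Type*} [NormedAddCommGroup E] [NormedSpace ℝ E]
    {M : Matrix (Fin k) (Fin k) ℝ} (hM : M.det ≠ 0) (F : (Fin k → ℝ) → E) :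
    ∫ x, F (M *ᵥ x) = |M.det|⁻¹ • ∫ y, F y := by
  have h_det : LinearMap.det (toLin' M) ≠ 0 := by rwa [LinearMap.det_toLin']
  let e := (LinearMap.equivOfDetNeZero (toLin' M) h_det).toContinuousLinearEquiv
  have h_map := (e.toHomeomorph.measurableEmbedding.integral_map (μ := volume) F).symm
  have h_vol : Measure.map e volume = ENNReal.ofReal |M.det⁻¹| • (volume : Measure (Fin k → ℝ)) :=
    Real.map_matrix_volume_pi_eq_smul_volume_pi hM
  refine h_map.trans ?_
  change ∫ y, F y ∂(Measure.map e volume) = _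
  rw [h_vol, integral_smul_measure, ENNReal.toReal_ofReal (abs_nonneg _), abs_inv]

theorem integral_cexp_neg_pi_mul_sum_sq_mul_cexp (d : Fin k → ℝ) :
    ∫ y : Fin k → ℝ, Complex.exp (-(Real.pi : ℂ) * ∑ i, (y i : ℂ) ^ 2) *
      Complex.exp ((d ⬝ᵥ y : ℝ) * Complex.I) = Complex.exp (-(d ⬝ᵥ d) / (4 * Real.pi) : ℝ) := by
  have h_exponent (y : Fin k → ℝ) :
      Complex.exp (-(Real.pi : ℂ) * ∑ i, (y i : ℂ) ^ 2) * Complex.exp ((d ⬝ᵥ y : ℝ) * Complex.I) =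
        Complex.exp (-(Real.pi : ℂ) * ∑ i, (y i : ℂ) ^ 2 + ∑ i, (d i * Complex.I : ℂ) * y i) := by
    rw [← Complex.exp_add]
    simp [dotProduct, Finset.sum_mul, mul_right_comm]
  have h_pi : (Real.pi : ℂ) ≠ 0 := by exact_mod_cast Real.pi_ne_zero
  simp_rw [h_exponent]
  rw [GaussianFourier.integral_cexp_neg_mul_sum_add (by simpa using Real.pi_pos), div_self h_pi,
    Complex.one_cpow, one_mul]
  congr 1
  simp [dotProduct, mul_pow, ← sq]

open scoped MatrixOrder Matrix.Norms.L2Operator in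
theorem exists_eq_transpose_mul_self_of_posDef {B : Matrix (Fin k) (Fin k) ℝ} (hB : B.PosDef) :
    ∃ M : Matrix (Fin k) (Fin k) ℝ, M.det ≠ 0 ∧ B = Mᵀ * M := by
  obtain ⟨M, hM, rfl⟩ := CStarAlgebra.isStrictlyPositive_iff_eq_star_mul_self.1
    hB.isStrictlyPositive
  exact ⟨M, ((isUnit_iff_isUnit_det M).1 hM).ne_zero, rfl⟩

theorem gaussFn_transpose_mul_self (M : Matrix (Fin k) (Fin k) ℝ) (x : Fin k → ℝ) :
    gaussFn (Mᵀ * M) x = Real.exp (-Real.pi * ∑ i, (M *ᵥ x) i ^ 2) := by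
  rw [gaussFn, ← mulVec_mulVec, mulVec_transpose, ← dotProduct_mulVec]
  simp [dotProduct, sq]

theorem integral_gaussFn_mul_cexp {B : Matrix (Fin k) (Fin k) ℝ} (hB : B.PosDef)
    (c : Fin k → ℝ) :
    ∫ x, (gaussFn B x : ℂ) * Complex.exp ((c ⬝ᵥ x : ℝ) * Complex.I) =
      ((√B.det)⁻¹ : ℝ) * Complex.exp ((-(c ⬝ᵥ B⁻¹ *ᵥ c) / (4 * Real.pi) : ℝ)) := by
  obtain ⟨M, hM, rfl⟩ := exists_eq_transpose_mul_self_of_posDef hB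
  set d : Fin k → ℝ := M⁻¹ᵀ *ᵥ c with hd
  have h_dot (x : Fin k → ℝ) : c ⬝ᵥ x = d ⬝ᵥ M *ᵥ x := by
    rw [hd, mulVec_transpose, ← dotProduct_mulVec, mulVec_mulVec,
      nonsing_inv_mul _ (isUnit_iff_ne_zero.2 hM), one_mulVec]
  have h_quad : c ⬝ᵥ (Mᵀ * M)⁻¹ *ᵥ c = d ⬝ᵥ d := by
    rw [Matrix.mul_inv_rev, ← mulVec_mulVec, dotProduct_mulVec, ← mulVec_transpose,
      ← transpose_nonsing_inv]
  have h_subst (x : Fin k → ℝ) :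
      (gaussFn (Mᵀ * M) x : ℂ) * Complex.exp ((c ⬝ᵥ x : ℝ) * Complex.I) =
        Complex.exp (-(Real.pi : ℂ) * ∑ i, ((M *ᵥ x) i : ℂ) ^ 2) *
          Complex.exp ((d ⬝ᵥ M *ᵥ x : ℝ) * Complex.I) := by
    rw [gaussFn_transpose_mul_self, h_dot]
    push_cast
    rfl
  simp_rw [h_subst]
  rw [integral_comp_mulVec hM (fun y ↦ Complex.exp (-(Real.pi : ℂ) * ∑ i, (y i : ℂ) ^ 2) *
      Complex.exp ((d ⬝ᵥ y : ℝ) * Complex.I)), integral_cexp_neg_pi_mul_sum_sq_mul_cexp, h_quad,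
    det_mul, det_transpose, Real.sqrt_mul_self_eq_abs, Complex.real_smul]

theorem integral_ofReal_gaussFn {B : Matrix (Fin k) (Fin k) ℝ} (hB : B.PosDef) :
    ∫ x, (gaussFn B x : ℂ) = ((√B.det)⁻¹ : ℝ) := by
  simpa using integral_gaussFn_mul_cexp hB 0

theorem integrable_gaussFn {B : Matrix (Fin k) (Fin k) ℝ} (hB : B.PosDef) :
    Integrable (gaussFn B) := by
  have h_ne : ∫ x, (gaussFn B x : ℂ) ≠ 0 := by
    rw [integral_ofReal_gaussFn hB]
    simp [Real.sqrt_ne_zero'.2 hB.det_pos]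
  simpa using (Integrable.of_integral_ne_zero h_ne).re

theorem integral_gaussFn {B : Matrix (Fin k) (Fin k) ℝ} (hB : B.PosDef) :
    ∫ x, gaussFn B x = (√B.det)⁻¹ := by
  exact_mod_cast integral_complex_ofReal.symm.trans (integral_ofReal_gaussFn hB)

theorem lintegral_gaussFn {B : Matrix (Fin k) (Fin k) ℝ} (hB : B.PosDef) :
    ∫⁻ x, ENNReal.ofReal (gaussFn B x) = (ENNReal.ofReal B.det)⁻¹ ^ (2⁻¹ : ℝ) := by
  rw [← ofReal_integral_eq_lintegral_ofReal (integrable_gaussFn hB)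
    (.of_forall fun x ↦ (gaussFn_pos B x).le), integral_gaussFn hB,
    ENNReal.ofReal_inv_of_pos (Real.sqrt_pos.2 hB.det_pos), Real.sqrt_eq_rpow,
    ← ENNReal.ofReal_rpow_of_pos hB.det_pos, ENNReal.inv_rpow, one_div]

end Gaussian

/-! ### Log-convex and log-concave functions -/

namespace LogConvexFun

variable {k l : ℕ} {h h₁ h₂ : (Fin k → ℝ) → ℝ}

protected theorem convexOn (hh : LogConvexFun h) : ConvexOn ℝ Set.univ h :=
  ⟨convex_univ, fun x _ y _ a b ha hb hab ↦ (hh.2 x y a b ha hb hab).trans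
    (Real.geom_mean_le_arith_mean2_weighted ha hb (hh.1 x) (hh.1 y) hab)⟩

protected theorem continuous (hh : LogConvexFun h) : Continuous h :=
  hh.convexOn.locallyLipschitz.continuous

theorem sq_le (hh : LogConvexFun h) (x w : Fin k → ℝ) : h x ^ 2 ≤ h (x + w) * h (x - w) := by
  have h_mid : (1 / 2 : ℝ) • (x + w) + (1 / 2 : ℝ) • (x - w) = x := by module
  have h_le := hh.2 (x + w) (x - w) (1 / 2) (1 / 2) (by norm_num) (by norm_num) (by norm_num)
  rw [h_mid, ← Real.sqrt_eq_rpow, ← Real.sqrt_eq_rpow, ← Real.sqrt_mul (hh.1 _)] at h_le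
  exact (Real.le_sqrt (hh.1 x) (mul_nonneg (hh.1 _) (hh.1 _))).1 h_le

protected theorem mul (hh₁ : LogConvexFun h₁) (hh₂ : LogConvexFun h₂) :
    LogConvexFun fun x ↦ h₁ x * h₂ x := by
  refine ⟨fun x ↦ mul_nonneg (hh₁.1 x) (hh₂.1 x), fun x y a b ha hb hab ↦ ?_⟩
  rw [Real.mul_rpow (hh₁.1 x) (hh₂.1 x), Real.mul_rpow (hh₁.1 y) (hh₂.1 y), mul_mul_mul_comm]
  exact mul_le_mul (hh₁.2 x y a b ha hb hab) (hh₂.2 x y a b ha hb hab) (hh₂.1 _)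
    (mul_nonneg (Real.rpow_nonneg (hh₁.1 x) _) (Real.rpow_nonneg (hh₁.1 y) _))

protected theorem const {c : ℝ} (hc : 0 ≤ c) : LogConvexFun fun _ : Fin k → ℝ ↦ c := by
  refine ⟨fun _ ↦ hc, fun x y a b ha hb hab ↦ ?_⟩
  rw [← Real.rpow_add_of_nonneg hc ha hb, hab, Real.rpow_one]

theorem comp_linearMap_add (hh : LogConvexFun h) (L : (Fin l → ℝ) →ₗ[ℝ] Fin k → ℝ)
    (v : Fin k → ℝ) : LogConvexFun fun x ↦ h (L x + v) := by
  refine ⟨fun _ ↦ hh.1 _, fun x y a b ha hb hab ↦ ?_⟩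
  have h_combo : L (a • x + b • y) + v = a • (L x + v) + b • (L y + v) := by
    rw [smul_add, smul_add, add_add_add_comm, ← add_smul, hab, one_smul, map_add, map_smul,
      map_smul]
  simp only [h_combo]
  exact hh.2 _ _ a b ha hb hab

theorem comp_neg (hh : LogConvexFun h) : LogConvexFun fun x ↦ h (-x) := by
  simpa using hh.comp_linearMap_add (-LinearMap.id) 0

protected theorem integral {α : Type*} [MeasurableSpace α] {μ : Measure α}
    {h : (Fin k → ℝ) → α → ℝ} (hh : ∀ w, LogConvexFun fun z ↦ h z w)
    (h_int : ∀ z, Integrable (h z) μ) : LogConvexFun fun z ↦ ∫ w, h z w ∂μ := by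
  have h_nonneg (z w) : 0 ≤ h z w := (hh w).1 z
  have ofReal_integral (z) :
      ENNReal.ofReal (∫ w, h z w ∂μ) = ∫⁻ w, ENNReal.ofReal (h z w) ∂μ :=
    ofReal_integral_eq_lintegral_ofReal (h_int z) (.of_forall (h_nonneg z))
  have integral_nonneg (z) : 0 ≤ ∫ w, h z w ∂μ := MeasureTheory.integral_nonneg (h_nonneg z)
  refine ⟨integral_nonneg, fun x y a b ha hb hab ↦ ?_⟩
  rw [← ENNReal.ofReal_le_ofReal_iff (mul_nonneg (Real.rpow_nonneg (integral_nonneg _) _)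
    (Real.rpow_nonneg (integral_nonneg _) _)),
    ENNReal.ofReal_mul (Real.rpow_nonneg (integral_nonneg _) _),
    ← ENNReal.ofReal_rpow_of_nonneg (integral_nonneg _) ha,
    ← ENNReal.ofReal_rpow_of_nonneg (integral_nonneg _) hb,
    ofReal_integral, ofReal_integral, ofReal_integral]
  refine le_trans (lintegral_mono fun w ↦ ?_) (ENNReal.lintegral_mul_norm_pow_le
    (h_int x).aemeasurable.ennreal_ofReal (h_int y).aemeasurable.ennreal_ofReal ha hb hab)
  rw [ENNReal.ofReal_rpow_of_nonneg (h_nonneg _ _) ha,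
    ENNReal.ofReal_rpow_of_nonneg (h_nonneg _ _) hb,
    ← ENNReal.ofReal_mul (Real.rpow_nonneg (h_nonneg _ _) _)]
  exact ENNReal.ofReal_le_ofReal ((hh w).2 x y a b ha hb hab)

protected theorem of_tendsto {h : ℕ → (Fin k → ℝ) → ℝ} {h' : (Fin k → ℝ) → ℝ}
    (hh : ∀ j, LogConvexFun (h j)) (h_lim : ∀ x, Tendsto (fun j ↦ h j x) atTop (𝓝 (h' x))) :
    LogConvexFun h' :=
  ⟨fun x ↦ ge_of_tendsto' (h_lim x) fun j ↦ (hh j).1 x, fun x y a b ha hb hab ↦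
    le_of_tendsto_of_tendsto' (h_lim _) (((h_lim x).rpow_const (.inr ha)).mul
      ((h_lim y).rpow_const (.inr hb))) fun j ↦ (hh j).2 x y a b ha hb hab⟩

end LogConvexFun

namespace LogConcaveFun

variable {k l : ℕ} {h h₁ h₂ : (Fin k → ℝ) → ℝ}

protected theorem mul (hh₁ : LogConcaveFun h₁) (hh₂ : LogConcaveFun h₂) :
    LogConcaveFun fun x ↦ h₁ x * h₂ x := by
  refine ⟨fun x ↦ mul_nonneg (hh₁.1 x) (hh₂.1 x), fun x y a b ha hb hab ↦ ?_⟩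
  rw [Real.mul_rpow (hh₁.1 x) (hh₂.1 x), Real.mul_rpow (hh₁.1 y) (hh₂.1 y), mul_mul_mul_comm]
  exact mul_le_mul (hh₁.2 x y a b ha hb hab) (hh₂.2 x y a b ha hb hab)
    (mul_nonneg (Real.rpow_nonneg (hh₂.1 x) _) (Real.rpow_nonneg (hh₂.1 y) _)) (hh₁.1 _)

protected theorem const {c : ℝ} (hc : 0 ≤ c) : LogConcaveFun fun _ : Fin k → ℝ ↦ c := by
  refine ⟨fun _ ↦ hc, fun x y a b ha hb hab ↦ ?_⟩
  rw [← Real.rpow_add_of_nonneg hc ha hb, hab, Real.rpow_one]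

theorem comp_linearMap_add (hh : LogConcaveFun h) (L : (Fin l → ℝ) →ₗ[ℝ] Fin k → ℝ)
    (v : Fin k → ℝ) : LogConcaveFun fun x ↦ h (L x + v) := by
  refine ⟨fun _ ↦ hh.1 _, fun x y a b ha hb hab ↦ ?_⟩
  have h_combo : L (a • x + b • y) + v = a • (L x + v) + b • (L y + v) := by
    rw [smul_add, smul_add, add_add_add_comm, ← add_smul, hab, one_smul, map_add, map_smul,
      map_smul]
  simp only [h_combo]
  exact hh.2 _ _ a b ha hb hab

theorem comp_neg (hh : LogConcaveFun h) : LogConcaveFun fun x ↦ h (-x) := by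
  simpa using hh.comp_linearMap_add (-LinearMap.id) 0

protected theorem integral {h : (Fin k → ℝ) → (Fin l → ℝ) → ℝ} (h_nonneg : ∀ z w, 0 ≤ h z w)
    (hh : ∀ z z' w w' (a b : ℝ), 0 ≤ a → 0 ≤ b → a + b = 1 →
      h z w ^ a * h z' w' ^ b ≤ h (a • z + b • z') (a • w + b • w'))
    (h_meas : ∀ z, Measurable (h z)) (h_int : ∀ z, Integrable (h z)) :
    LogConcaveFun fun z ↦ ∫ w, h z w := by
  have ofReal_integral (z) : ENNReal.ofReal (∫ w, h z w) = ∫⁻ w, ENNReal.ofReal (h z w) :=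
    ofReal_integral_eq_lintegral_ofReal (h_int z) (.of_forall (h_nonneg z))
  have integral_nonneg (z) : 0 ≤ ∫ w, h z w := MeasureTheory.integral_nonneg (h_nonneg z)
  refine ⟨integral_nonneg, fun x y a b ha hb hab ↦ ?_⟩
  rcases ha.eq_or_lt with rfl | ha'
  · obtain rfl : b = 1 := by linarith
    simp
  rcases hb.eq_or_lt with rfl | hb'
  · obtain rfl : a = 1 := by linarith
    simp
  rw [← ENNReal.ofReal_le_ofReal_iff (integral_nonneg _),
    ENNReal.ofReal_mul (Real.rpow_nonneg (integral_nonneg _) _),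
    ← ENNReal.ofReal_rpow_of_nonneg (integral_nonneg _) ha,
    ← ENNReal.ofReal_rpow_of_nonneg (integral_nonneg _) hb,
    ofReal_integral, ofReal_integral, ofReal_integral]
  refine prekopa_leindler (h_meas _).ennreal_ofReal (h_meas _).ennreal_ofReal
    (h_meas _).ennreal_ofReal ha' hb' hab fun w w' ↦ ?_
  rw [ENNReal.ofReal_rpow_of_nonneg (h_nonneg _ _) ha,
    ENNReal.ofReal_rpow_of_nonneg (h_nonneg _ _) hb,
    ← ENNReal.ofReal_mul (Real.rpow_nonneg (h_nonneg _ _) _)]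
  exact ENNReal.ofReal_le_ofReal (hh _ _ _ _ _ _ ha hb hab)

protected theorem of_tendsto {h : ℕ → (Fin k → ℝ) → ℝ} {h' : (Fin k → ℝ) → ℝ}
    (hh : ∀ j, LogConcaveFun (h j)) (h_lim : ∀ x, Tendsto (fun j ↦ h j x) atTop (𝓝 (h' x))) :
    LogConcaveFun h' :=
  ⟨fun x ↦ ge_of_tendsto' (h_lim x) fun j ↦ (hh j).1 x, fun x y a b ha hb hab ↦
    le_of_tendsto_of_tendsto' (((h_lim x).rpow_const (.inr ha)).mul
      ((h_lim y).rpow_const (.inr hb))) (h_lim _) fun j ↦ (hh j).2 x y a b ha hb hab⟩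

end LogConcaveFun

theorem logConcaveFun_gaussFn {k : ℕ} {Q : Matrix (Fin k) (Fin k) ℝ} (hQ : Q.PosSemidef) :
    LogConcaveFun (gaussFn Q) := by
  refine ⟨fun x ↦ (gaussFn_pos Q x).le, fun x y a b ha hb hab ↦ ?_⟩
  simp only [gaussFn, ← Real.exp_mul, ← Real.exp_add]
  refine Real.exp_le_exp.2 ?_
  have h_form : 0 ≤ Q *ᵥ (x - y) ⬝ᵥ (x - y) := by
    simpa [dotProduct_comm] using hQ.dotProduct_mulVec_nonneg (x - y)
  obtain rfl : b = 1 - a := by linarith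
  simp only [mulVec_smul, mulVec_add, mulVec_sub, smul_dotProduct, dotProduct_smul,
    add_dotProduct, dotProduct_add, sub_dotProduct, dotProduct_sub, smul_eq_mul] at h_form ⊢
  nlinarith [mul_nonneg (mul_nonneg ha hb) (mul_nonneg Real.pi_pos.le h_form)]

/-! ### Rotating a pair of densities by `π / 4` -/

section Rotation

theorem inv_sqrt_two_mul_self : (√2)⁻¹ * (√2)⁻¹ = (2⁻¹ : ℝ) := by
  rw [← mul_inv, Real.mul_self_sqrt zero_le_two]

section Algebra

variable (E : Type*) [AddCommGroup E] [Module ℝ E]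

/-- The Hadamard transform `(u, v) ↦ ((u + v) / √2, (u - v) / √2)`. It differs from the rotation by
`π / 4` by a reflection, which makes it an involution. -/
def hadamardMap : E × E →ₗ[ℝ] E × E :=
  LinearMap.prod ((√2)⁻¹ • (LinearMap.fst ℝ E E + LinearMap.snd ℝ E E))
    ((√2)⁻¹ • (LinearMap.fst ℝ E E - LinearMap.snd ℝ E E))

variable {E}

theorem hadamardMap_apply (q : E × E) :
    hadamardMap E q = ((√2)⁻¹ • (q.1 + q.2), (√2)⁻¹ • (q.1 - q.2)) := rfl

variable (E) in
theorem hadamardMap_involutive : Function.Involutive (hadamardMap E) := by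
  rintro ⟨u, v⟩
  simp only [hadamardMap_apply, ← smul_add, ← smul_sub, smul_smul, inv_sqrt_two_mul_self]
  ext <;> dsimp only <;> module

/-- The product density of `f` and `g` in the coordinates `z = (x + y) / √2`,
`w = (x - y) / √2`. -/
def rotMul (f g : E → ℝ) (z w : E) : ℝ :=
  f ((√2)⁻¹ • (z + w)) * g ((√2)⁻¹ • (z - w))

theorem rotMul_swap (f g : E → ℝ) (z w : E) :
    rotMul f g z w = rotMul f (fun x ↦ g (-x)) w z := by
  simp only [rotMul, ← smul_neg, neg_sub, add_comm w z]

theorem rotMul_mul_mul (f₁ f₂ g₁ g₂ : E → ℝ) (z w : E) :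
    rotMul (fun x ↦ f₁ x * f₂ x) (fun x ↦ g₁ x * g₂ x) z w =
      rotMul f₁ g₁ z w * rotMul f₂ g₂ z w :=
  mul_mul_mul_comm _ _ _ _

end Algebra

theorem rotMul_gaussFn {k : ℕ} (Q : Matrix (Fin k) (Fin k) ℝ) (z w : Fin k → ℝ) :
    rotMul (gaussFn Q) (gaussFn Q) z w = gaussFn Q z * gaussFn Q w := by
  rw [rotMul, smul_add, smul_sub]
  exact gaussFn_add_mul_gaussFn_sub_of_sq_add_sq_eq_one Q
    (by rw [sq, inv_sqrt_two_mul_self]; norm_num) z w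

theorem rotMul_gaussFn_mul {k : ℕ} (Q : Matrix (Fin k) (Fin k) ℝ) (h₁ h₂ : (Fin k → ℝ) → ℝ)
    (z w : Fin k → ℝ) :
    rotMul (fun x ↦ gaussFn Q x * h₁ x) (fun x ↦ gaussFn Q x * h₂ x) z w =
      gaussFn Q z * (gaussFn Q w * rotMul h₁ h₂ z w) := by
  rw [rotMul_mul_mul, rotMul_gaussFn, mul_assoc]

section Measure

variable {E : Type*} [NormedAddCommGroup E] [NormedSpace ℝ E] [FiniteDimensional ℝ E]
  [MeasureSpace E] [BorelSpace E]

variable (E) in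
/-- `hadamardMap` as a measurable equivalence. -/
def hadamardEquiv : E × E ≃ᵐ E × E :=
  MeasurableEquiv.ofInvolutive (hadamardMap E) (hadamardMap_involutive E)
    (hadamardMap E).continuous_of_finiteDimensional.measurable

/-- The density of `(X + Y) / √2` for independent `X`, `Y` with densities `f`, `g`. -/
def circ (f g : E → ℝ) (z : E) : ℝ := ∫ w, rotMul f g z w

variable [(volume : Measure E).IsAddHaarMeasure] {f g : E → ℝ}

variable (E) in
theorem measurePreserving_hadamardEquiv : MeasurePreserving (hadamardEquiv E) := by
  refine ⟨(hadamardEquiv E).measurable, ?_⟩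
  have h_det : LinearMap.det (hadamardMap E) * LinearMap.det (hadamardMap E) = 1 := by
    rw [← map_mul, show hadamardMap E * hadamardMap E = 1 from
      LinearMap.ext (hadamardMap_involutive E), map_one]
  have h_abs : |(LinearMap.det (hadamardMap E))⁻¹| = 1 := by
    rw [abs_inv, inv_eq_one, ← abs_one, abs_eq_abs]
    exact mul_self_eq_one_iff.1 h_det
  have : (volume : Measure (E × E)).IsAddHaarMeasure := Measure.prod.instIsAddHaarMeasure _ _
  have h_map := Measure.map_linearMap_addHaar_eq_smul_addHaar (volume : Measure (E × E))
    (left_ne_zero_of_mul_eq_one h_det)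
  rwa [h_abs, ENNReal.ofReal_one, one_smul] at h_map

theorem lintegral_mul_lintegral_eq_lintegral_lintegral {F G : E → ℝ≥0∞} (hF : Measurable F)
    (hG : Measurable G) :
    (∫⁻ x, F x) * ∫⁻ y, G y =
      ∫⁻ u, ∫⁻ v, F ((√2)⁻¹ • (u + v)) * G ((√2)⁻¹ • (u - v)) := by
  have h_meas : Measurable fun q : E × E ↦ F q.1 * G q.2 := by fun_prop
  rw [← lintegral_prod_mul hF.aemeasurable hG.aemeasurable, ← Measure.volume_eq_prod,
    ← (measurePreserving_hadamardEquiv E).lintegral_comp h_meas, Measure.volume_eq_prod]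
  exact lintegral_prod _ (h_meas.comp (hadamardEquiv E).measurable).aemeasurable

theorem integrable_uncurry_rotMul (hf : Integrable f) (hg : Integrable g) :
    Integrable fun q : E × E ↦ rotMul f g q.1 q.2 :=
  (measurePreserving_hadamardEquiv E).integrable_comp_of_integrable (hf.mul_prod hg)

theorem integrable_circ (hf : Integrable f) (hg : Integrable g) : Integrable (circ f g) :=
  (integrable_uncurry_rotMul hf hg).integral_prod_left

theorem integral_circ_mul (hf : Integrable f) (hg : Integrable g) {Φ : E → ℂ}
    (hΦ : Continuous Φ) {C : ℝ} (hΦ_le : ∀ x, ‖Φ x‖ ≤ C) :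
    ∫ z, (circ f g z : ℂ) * Φ z =
      ∫ x, ∫ y, ((f x : ℂ) * g y) * Φ ((√2)⁻¹ • (x + y)) := by
  have h_int : Integrable fun q : E × E ↦ ((f q.1 : ℂ) * g q.2) * Φ ((√2)⁻¹ • (q.1 + q.2)) :=
    ((hf.ofReal (𝕜 := ℂ)).mul_prod hg.ofReal).mul_bdd
      (hΦ.comp (by fun_prop)).aestronglyMeasurable (.of_forall fun _ ↦ hΦ_le _)
  have h_rot (q : E × E) : ((f (hadamardEquiv E q).1 : ℂ) * g (hadamardEquiv E q).2) *
      Φ ((√2)⁻¹ • ((hadamardEquiv E q).1 + (hadamardEquiv E q).2)) =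
        (rotMul f g q.1 q.2 : ℂ) * Φ q.1 := by
    have h_fst : (√2)⁻¹ • ((hadamardEquiv E q).1 + (hadamardEquiv E q).2) = q.1 :=
      congrArg Prod.fst (hadamardMap_involutive E q)
    rw [h_fst, rotMul, Complex.ofReal_mul]
    rfl
  have h_int_rot := (measurePreserving_hadamardEquiv E).integrable_comp_of_integrable h_int
  simp only [Function.comp_def, h_rot] at h_int_rot
  calc ∫ z, (circ f g z : ℂ) * Φ z = ∫ z, ∫ w, (rotMul f g z w : ℂ) * Φ z := by
        simp only [integral_mul_const, integral_complex_ofReal, circ]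
    _ = ∫ q : E × E, (rotMul f g q.1 q.2 : ℂ) * Φ q.1 := (integral_prod _ h_int_rot).symm
    _ = ∫ q : E × E, ((f q.1 : ℂ) * g q.2) * Φ ((√2)⁻¹ • (q.1 + q.2)) := by
        simp only [← h_rot]
        exact (measurePreserving_hadamardEquiv E).integral_comp'
          (fun q : E × E ↦ ((f q.1 : ℂ) * g q.2) * Φ ((√2)⁻¹ • (q.1 + q.2)))
    _ = _ := integral_prod _ h_int

theorem integral_circ (hf : Integrable f) (hg : Integrable g) :
    ∫ z, circ f g z = (∫ x, f x) * ∫ x, g x := by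
  have h_one := integral_circ_mul hf hg (Φ := fun _ ↦ 1) continuous_const fun _ ↦ norm_one.le
  simp only [mul_one, integral_const_mul, integral_mul_const, integral_complex_ofReal] at h_one
  exact_mod_cast h_one

end Measure

end Rotation

section RotMulConvexity

variable {k : ℕ} {h₁ h₂ : (Fin k → ℝ) → ℝ}

theorem LogConvexFun.rotMul_left (hh₁ : LogConvexFun h₁) (hh₂ : LogConvexFun h₂)
    (w : Fin k → ℝ) : LogConvexFun fun z ↦ rotMul h₁ h₂ z w := by
  let L : (Fin k → ℝ) →ₗ[ℝ] Fin k → ℝ := (√2)⁻¹ • LinearMap.id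
  have hL (x : Fin k → ℝ) : L x = (√2)⁻¹ • x := rfl
  simpa only [rotMul, smul_add, sub_eq_add_neg, smul_neg, hL] using
    (hh₁.comp_linearMap_add L ((√2)⁻¹ • w)).mul (hh₂.comp_linearMap_add L (-((√2)⁻¹ • w)))

theorem LogConvexFun.rotMul_right (hh₁ : LogConvexFun h₁) (hh₂ : LogConvexFun h₂)
    (z : Fin k → ℝ) : LogConvexFun (rotMul h₁ h₂ z) := by
  simpa only [← rotMul_swap] using hh₁.rotMul_left hh₂.comp_neg z

theorem LogConcaveFun.rotMul_le_rotMul (hh₁ : LogConcaveFun h₁) (hh₂ : LogConcaveFun h₂)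
    (z z' w w' : Fin k → ℝ) {a b : ℝ} (ha : 0 ≤ a) (hb : 0 ≤ b) (hab : a + b = 1) :
    rotMul h₁ h₂ z w ^ a * rotMul h₁ h₂ z' w' ^ b ≤
      rotMul h₁ h₂ (a • z + b • z') (a • w + b • w') := by
  have h_add : (√2)⁻¹ • (a • z + b • z' + (a • w + b • w')) =
      a • ((√2)⁻¹ • (z + w)) + b • ((√2)⁻¹ • (z' + w')) := by module
  have h_sub : (√2)⁻¹ • (a • z + b • z' - (a • w + b • w')) =
      a • ((√2)⁻¹ • (z - w)) + b • ((√2)⁻¹ • (z' - w')) := by module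
  rw [rotMul, rotMul, rotMul, h_add, h_sub, Real.mul_rpow (hh₁.1 _) (hh₂.1 _),
    Real.mul_rpow (hh₁.1 _) (hh₂.1 _), mul_mul_mul_comm]
  exact mul_le_mul (hh₁.2 _ _ _ _ ha hb hab) (hh₂.2 _ _ _ _ ha hb hab)
    (mul_nonneg (Real.rpow_nonneg (hh₂.1 _) _) (Real.rpow_nonneg (hh₂.1 _) _)) (hh₁.1 _)

theorem LogConcaveFun.rotMul_right (hh₁ : LogConcaveFun h₁) (hh₂ : LogConcaveFun h₂)
    (z : Fin k → ℝ) : LogConcaveFun (rotMul h₁ h₂ z) := by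
  refine ⟨fun w ↦ mul_nonneg (hh₁.1 _) (hh₂.1 _), fun w w' a b ha hb hab ↦ ?_⟩
  simpa [← add_smul, hab] using hh₁.rotMul_le_rotMul hh₂ z z w w' ha hb hab

end RotMulConvexity

/-! ### Functions more log-convex or more log-concave than a Gaussian -/

theorem moreLogConvex_iff {k : ℕ} {f : (Fin k → ℝ) → ℝ} {Q : Matrix (Fin k) (Fin k) ℝ} :
    MoreLogConvex f Q ↔ LogConvexFun fun x ↦ f x / gaussFn Q x := by
  refine ⟨?_, fun h ↦ ⟨_, h, funext fun x ↦ (mul_div_cancel₀ _ (gaussFn_pos Q x).ne').symm⟩⟩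
  rintro ⟨h, hh, rfl⟩
  simpa [mul_div_cancel_left₀, (gaussFn_pos Q _).ne'] using hh

theorem moreLogConcave_iff {k : ℕ} {f : (Fin k → ℝ) → ℝ} {Q : Matrix (Fin k) (Fin k) ℝ} :
    MoreLogConcave f Q ↔ LogConcaveFun fun x ↦ f x / gaussFn Q x := by
  refine ⟨?_, fun h ↦ ⟨_, h, funext fun x ↦ (mul_div_cancel₀ _ (gaussFn_pos Q x).ne').symm⟩⟩
  rintro ⟨h, hh, rfl⟩
  simpa [mul_div_cancel_left₀, (gaussFn_pos Q _).ne'] using hh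

namespace MoreLogConvex

variable {k : ℕ} {f g : (Fin k → ℝ) → ℝ} {R : Matrix (Fin k) (Fin k) ℝ}

theorem nonneg (hf : MoreLogConvex f R) (x : Fin k → ℝ) : 0 ≤ f x := by
  obtain ⟨h, hh, rfl⟩ := hf
  exact mul_nonneg (gaussFn_pos R x).le (hh.1 x)

protected theorem continuous (hf : MoreLogConvex f R) : Continuous f := by
  obtain ⟨h, hh, rfl⟩ := hf
  exact (continuous_gaussFn R).mul hh.continuous

theorem mul_gaussFn_le (hf : MoreLogConvex f R) (x w : Fin k → ℝ) :
    f x * gaussFn R w ≤ (f (x + w) + f (x - w)) / 2 := by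
  have h_sq : (f x * gaussFn R w) ^ 2 ≤ f (x + w) * f (x - w) := by
    obtain ⟨h, hh, rfl⟩ := hf
    calc (gaussFn R x * h x * gaussFn R w) ^ 2
        = (gaussFn R x * gaussFn R w) ^ 2 * h x ^ 2 := by ring
      _ ≤ (gaussFn R x * gaussFn R w) ^ 2 * (h (x + w) * h (x - w)) := by
          gcongr
          exact hh.sq_le x w
      _ = _ := by rw [← gaussFn_add_mul_gaussFn_sub]; ring
  refine le_of_sq_le_sq (h_sq.trans ?_) (by linarith [hf.nonneg (x + w), hf.nonneg (x - w)])
  nlinarith [sq_nonneg (f (x + w) - f (x - w))]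

theorem le_mul_integral (hR : R.PosDef) (hf : MoreLogConvex f R) (hf_int : Integrable f)
    (x : Fin k → ℝ) : f x ≤ √R.det * ∫ y, f y := by
  have h_le : ∫ w, f x * gaussFn R w ≤ ∫ w, (f (x + w) + f (x - w)) / 2 :=
    integral_mono ((integrable_gaussFn hR).const_mul _)
      (((hf_int.comp_add_left x).add (hf_int.comp_sub_left x)).div_const 2) (hf.mul_gaussFn_le x)
  rw [integral_const_mul, integral_gaussFn hR, integral_div,
    integral_add (hf_int.comp_add_left x) (hf_int.comp_sub_left x), integral_add_left_eq_self,
    integral_sub_left_eq_self, add_self_div_two, ← div_eq_mul_inv,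
    div_le_iff₀ (Real.sqrt_pos.2 hR.det_pos)] at h_le
  linarith

theorem comp_neg (hf : MoreLogConvex f R) : MoreLogConvex (fun x ↦ f (-x)) R := by
  obtain ⟨h, hh, rfl⟩ := hf
  exact ⟨_, hh.comp_neg, by simp [gaussFn_neg]⟩

theorem const_mul (hf : MoreLogConvex f R) {c : ℝ} (hc : 0 ≤ c) :
    MoreLogConvex (fun x ↦ c * f x) R := by
  obtain ⟨h, hh, rfl⟩ := hf
  exact ⟨_, (LogConvexFun.const hc).mul hh, by ext; ring⟩

protected theorem rotMul (hf : MoreLogConvex f R) (hg : MoreLogConvex g R) (z : Fin k → ℝ) :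
    MoreLogConvex (rotMul f g z) R := by
  obtain ⟨h₁, hh₁, rfl⟩ := hf
  obtain ⟨h₂, hh₂, rfl⟩ := hg
  refine ⟨_, (LogConvexFun.const (gaussFn_pos R z).le).mul (hh₁.rotMul_right hh₂ z),
    funext fun w ↦ ?_⟩
  rw [rotMul_gaussFn_mul, mul_left_comm]

protected theorem circ (hf : MoreLogConvex f R) (hg : MoreLogConvex g R)
    (h_int : ∀ z, Integrable (rotMul f g z)) : MoreLogConvex (circ f g) R := by
  obtain ⟨h₁, hh₁, rfl⟩ := hf
  obtain ⟨h₂, hh₂, rfl⟩ := hg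
  simp only [funext (rotMul_gaussFn_mul R h₁ h₂ _),
    integrable_const_mul_iff (gaussFn_pos R _).ne'.isUnit] at h_int
  refine ⟨_, LogConvexFun.integral (h := fun z w ↦ gaussFn R w * rotMul h₁ h₂ z w)
    (fun w ↦ (LogConvexFun.const (gaussFn_pos R w).le).mul (hh₁.rotMul_left hh₂ w)) h_int,
    funext fun z ↦ ?_⟩
  simp only [circ, rotMul_gaussFn_mul, integral_const_mul]

protected theorem of_tendsto {f : ℕ → (Fin k → ℝ) → ℝ} {f' : (Fin k → ℝ) → ℝ}
    (hf : ∀ j, MoreLogConvex (f j) R) (h_lim : ∀ x, Tendsto (fun j ↦ f j x) atTop (𝓝 (f' x))) :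
    MoreLogConvex f' R :=
  moreLogConvex_iff.2 <| .of_tendsto (fun j ↦ moreLogConvex_iff.1 (hf j))
    fun x ↦ (h_lim x).div_const _

end MoreLogConvex

namespace MoreLogConcave

variable {k : ℕ} {f g : (Fin k → ℝ) → ℝ} {Q : Matrix (Fin k) (Fin k) ℝ}

theorem nonneg (hf : MoreLogConcave f Q) (x : Fin k → ℝ) : 0 ≤ f x := by
  obtain ⟨h, hh, rfl⟩ := hf
  exact mul_nonneg (gaussFn_pos Q x).le (hh.1 x)

theorem comp_neg (hf : MoreLogConcave f Q) : MoreLogConcave (fun x ↦ f (-x)) Q := by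
  obtain ⟨h, hh, rfl⟩ := hf
  exact ⟨_, hh.comp_neg, by simp [gaussFn_neg]⟩

theorem const_mul (hf : MoreLogConcave f Q) {c : ℝ} (hc : 0 ≤ c) :
    MoreLogConcave (fun x ↦ c * f x) Q := by
  obtain ⟨h, hh, rfl⟩ := hf
  exact ⟨_, (LogConcaveFun.const hc).mul hh, by ext; ring⟩

protected theorem rotMul (hf : MoreLogConcave f Q) (hg : MoreLogConcave g Q) (z : Fin k → ℝ) :
    MoreLogConcave (rotMul f g z) Q := by
  obtain ⟨h₁, hh₁, rfl⟩ := hf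
  obtain ⟨h₂, hh₂, rfl⟩ := hg
  refine ⟨_, (LogConcaveFun.const (gaussFn_pos Q z).le).mul (hh₁.rotMul_right hh₂ z),
    funext fun w ↦ ?_⟩
  rw [rotMul_gaussFn_mul, mul_left_comm]

protected theorem circ (hQ : Q.PosSemidef) (hf : MoreLogConcave f Q) (hg : MoreLogConcave g Q)
    (hf_meas : Measurable f) (hg_meas : Measurable g) (h_int : ∀ z, Integrable (rotMul f g z)) :
    MoreLogConcave (circ f g) Q := by
  have hG := logConcaveFun_gaussFn hQ
  have h_gauss_meas := (continuous_gaussFn Q).measurable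
  have h_eq (z : Fin k → ℝ) : rotMul f g z = fun w ↦ gaussFn Q z *
      (gaussFn Q w * rotMul (fun x ↦ f x / gaussFn Q x) (fun x ↦ g x / gaussFn Q x) z w) := by
    ext w
    simp only [← rotMul_gaussFn_mul, mul_div_cancel₀ _ (gaussFn_pos Q _).ne']
  have hh₁ := moreLogConcave_iff.1 hf
  have hh₂ := moreLogConcave_iff.1 hg
  simp only [h_eq, integrable_const_mul_iff (gaussFn_pos Q _).ne'.isUnit] at h_int
  refine ⟨_, LogConcaveFun.integral (h := fun z w ↦ gaussFn Q w *
      rotMul (fun x ↦ f x / gaussFn Q x) (fun x ↦ g x / gaussFn Q x) z w)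
    (fun z w ↦ mul_nonneg (hG.1 w) ((hh₁.rotMul_right hh₂ z).1 w))
    (fun z z' w w' a b ha hb hab ↦ ?_) (fun z ↦ ?_) h_int, funext fun z ↦ ?_⟩
  · have h_nonneg (z w) := (hh₁.rotMul_right hh₂ z).1 w
    rw [Real.mul_rpow (hG.1 _) (h_nonneg _ _), Real.mul_rpow (hG.1 _) (h_nonneg _ _),
      mul_mul_mul_comm]
    exact mul_le_mul (hG.2 _ _ _ _ ha hb hab) (hh₁.rotMul_le_rotMul hh₂ _ _ _ _ ha hb hab)
      (mul_nonneg (Real.rpow_nonneg (h_nonneg _ _) _) (Real.rpow_nonneg (h_nonneg _ _) _))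
      (hG.1 _)
  · unfold rotMul
    fun_prop
  · simp only [circ, h_eq, integral_const_mul]

protected theorem of_tendsto {f : ℕ → (Fin k → ℝ) → ℝ} {f' : (Fin k → ℝ) → ℝ}
    (hf : ∀ j, MoreLogConcave (f j) Q) (h_lim : ∀ x, Tendsto (fun j ↦ f j x) atTop (𝓝 (f' x))) :
    MoreLogConcave f' Q :=
  moreLogConcave_iff.2 <| .of_tendsto (fun j ↦ moreLogConcave_iff.1 (hf j))
    fun x ↦ (h_lim x).div_const _

end MoreLogConcave

/-- The class of integrable densities that are more log-convex than `g_R` and, if `b` holds, also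
more log-concave than `g_Q`. The flag `b` lets one family contain functions with and without the
upper constraint. -/
structure Sandwiched {k : ℕ} (R Q : Matrix (Fin k) (Fin k) ℝ) (b : Prop) (f : (Fin k → ℝ) → ℝ) :
    Prop where
  convex : MoreLogConvex f R
  concave : b → MoreLogConcave f Q
  integrable : Integrable f

namespace Sandwiched

variable {k : ℕ} {f g : (Fin k → ℝ) → ℝ} {R Q : Matrix (Fin k) (Fin k) ℝ} {b : Prop}

theorem nonneg (hf : Sandwiched R Q b f) (x : Fin k → ℝ) : 0 ≤ f x := hf.convex.nonneg x

protected theorem continuous (hf : Sandwiched R Q b f) : Continuous f := hf.convex.continuous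

theorem integral_nonneg (hf : Sandwiched R Q b f) : 0 ≤ ∫ x, f x :=
  MeasureTheory.integral_nonneg hf.nonneg

theorem comp_neg (hf : Sandwiched R Q b f) : Sandwiched R Q b fun x ↦ f (-x) where
  convex := hf.convex.comp_neg
  concave hb := (hf.concave hb).comp_neg
  integrable := hf.integrable.comp_neg

theorem const_mul (hf : Sandwiched R Q b f) {c : ℝ} (hc : 0 ≤ c) :
    Sandwiched R Q b fun x ↦ c * f x where
  convex := hf.convex.const_mul hc
  concave hb := (hf.concave hb).const_mul hc
  integrable := hf.integrable.const_mul c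

theorem le_mul_integral (hR : R.PosDef) (hf : Sandwiched R Q b f) (x : Fin k → ℝ) :
    f x ≤ √R.det * ∫ y, f y :=
  hf.convex.le_mul_integral hR hf.integrable x

theorem integrable_rotMul (hR : R.PosDef) (hf : Sandwiched R Q b f) (hg : Sandwiched R Q b g)
    (z : Fin k → ℝ) : Integrable (rotMul f g z) := by
  refine Integrable.bdd_mul (c := √R.det * ∫ y, f y) ?_ ?_ (.of_forall fun w ↦ ?_)
  · exact (hg.integrable.comp_smul (by positivity : (√2)⁻¹ ≠ 0)).comp_sub_left z
  · exact (hf.continuous.comp (by fun_prop)).aestronglyMeasurable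
  · rw [Real.norm_of_nonneg (hf.nonneg _)]
    exact hf.le_mul_integral hR _

protected theorem rotMul (hR : R.PosDef) (hf : Sandwiched R Q b f) (hg : Sandwiched R Q b g)
    (z : Fin k → ℝ) : Sandwiched R Q b (rotMul f g z) where
  convex := hf.convex.rotMul hg.convex z
  concave hb := (hf.concave hb).rotMul (hg.concave hb) z
  integrable := hf.integrable_rotMul hR hg z

protected theorem circ (hR : R.PosDef) (hQ : Q.PosSemidef) (hf : Sandwiched R Q b f)
    (hg : Sandwiched R Q b g) : Sandwiched R Q b (circ f g) where
  convex := hf.convex.circ hg.convex (hf.integrable_rotMul hR hg)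
  concave hb := (hf.concave hb).circ hQ (hg.concave hb) hf.continuous.measurable
    hg.continuous.measurable (hf.integrable_rotMul hR hg)
  integrable := integrable_circ hf.integrable hg.integrable

end Sandwiched

/-! ### The Brascamp–Lieb functional and Ball's inequality -/

section BrascampLieb

variable {ι : Type*} [Fintype ι] {n : ℕ} {d : ι → ℕ} {C : ∀ i, Matrix (Fin (d i)) (Fin n) ℝ}
  {p : ι → ℝ} {𝒬 : Matrix (Fin n) (Fin n) ℝ} {f g : ∀ i, (Fin (d i) → ℝ) → ℝ}

/-- The integrand `e^{-π⟨𝒬x, x⟩} ∏ᵢ fᵢ(Cᵢ x)^{pᵢ}` of the Brascamp–Lieb functional. -/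
def blIntegrand (C : ∀ i, Matrix (Fin (d i)) (Fin n) ℝ) (p : ι → ℝ)
    (𝒬 : Matrix (Fin n) (Fin n) ℝ) (f : ∀ i, (Fin (d i) → ℝ) → ℝ) (x : Fin n → ℝ) : ℝ :=
  gaussFn 𝒬 x * ∏ i, f i (C i *ᵥ x) ^ p i

/-- The Brascamp–Lieb functional with Gaussian kernel. It takes values in `ℝ≥0∞`, so that no
integrability is presupposed. -/
def blIntegral (C : ∀ i, Matrix (Fin (d i)) (Fin n) ℝ) (p : ι → ℝ)
    (𝒬 : Matrix (Fin n) (Fin n) ℝ) (f : ∀ i, (Fin (d i) → ℝ) → ℝ) : ℝ≥0∞ :=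
  ∫⁻ x, ENNReal.ofReal (blIntegrand C p 𝒬 f x)

theorem blIntegrand_nonneg (hf : ∀ i x, 0 ≤ f i x) (x : Fin n → ℝ) :
    0 ≤ blIntegrand C p 𝒬 f x :=
  mul_nonneg (gaussFn_pos _ _).le (Finset.prod_nonneg fun i _ ↦ Real.rpow_nonneg (hf i _) _)

theorem continuous_blIntegrand (hp : ∀ i, 0 ≤ p i) (hf : ∀ i, Continuous (f i)) :
    Continuous (blIntegrand C p 𝒬 f) := by
  unfold blIntegrand
  refine (continuous_gaussFn 𝒬).mul (continuous_finsetProd _ fun i _ ↦ ?_)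
  exact ((hf i).comp (by fun_prop)).rpow_const fun _ ↦ .inr (hp i)

theorem ofReal_prod_rpow (hp : ∀ i, 0 ≤ p i) {c : ι → ℝ} (hc : ∀ i, 0 ≤ c i) :
    ENNReal.ofReal (∏ i, c i ^ p i) = ∏ i, ENNReal.ofReal (c i) ^ p i := by
  rw [ENNReal.ofReal_prod_of_nonneg fun i _ ↦ Real.rpow_nonneg (hc i) _]
  exact Finset.prod_congr rfl fun i _ ↦ (ENNReal.ofReal_rpow_of_nonneg (hc i) (hp i)).symm

theorem ofReal_blIntegrand (hp : ∀ i, 0 ≤ p i) (hf : ∀ i x, 0 ≤ f i x) (x : Fin n → ℝ) :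
    ENNReal.ofReal (blIntegrand C p 𝒬 f x) =
      ENNReal.ofReal (gaussFn 𝒬 x) * ∏ i, ENNReal.ofReal (f i (C i *ᵥ x)) ^ p i := by
  rw [blIntegrand, ENNReal.ofReal_mul (gaussFn_pos _ _).le,
    ofReal_prod_rpow hp fun i ↦ hf i (C i *ᵥ x)]

theorem blIntegral_const_mul (hp : ∀ i, 0 ≤ p i) (hf : ∀ i x, 0 ≤ f i x) {c : ι → ℝ}
    (hc : ∀ i, 0 ≤ c i) :
    blIntegral C p 𝒬 (fun i x ↦ c i * f i x) =
      blIntegral C p 𝒬 f * ∏ i, ENNReal.ofReal (c i) ^ p i := by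
  rw [← ofReal_prod_rpow hp hc, blIntegral, blIntegral,
    ← lintegral_mul_const' _ _ ENNReal.ofReal_ne_top]
  refine lintegral_congr fun x ↦ ?_
  rw [← ENNReal.ofReal_mul (blIntegrand_nonneg hf x), blIntegrand, blIntegrand,
    Finset.prod_congr rfl fun i _ ↦ Real.mul_rpow (hc i) (hf i _), Finset.prod_mul_distrib,
    mul_left_comm, mul_comm]

theorem blIntegrand_mul_blIntegrand (hf : ∀ i x, 0 ≤ f i x) (hg : ∀ i x, 0 ≤ g i x)
    (u v : Fin n → ℝ) :
    blIntegrand C p 𝒬 f ((√2)⁻¹ • (u + v)) * blIntegrand C p 𝒬 g ((√2)⁻¹ • (u - v)) =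
      gaussFn 𝒬 u * blIntegrand C p 𝒬 (fun i ↦ rotMul (f i) (g i) (C i *ᵥ u)) v := by
  simp only [blIntegrand, rotMul]
  rw [mul_mul_mul_comm, ← rotMul, rotMul_gaussFn, ← Finset.prod_mul_distrib, mul_assoc]
  simp only [← Real.mul_rpow (hf _ _) (hg _ _), mulVec_smul, mulVec_add, mulVec_sub]

variable {R Q : ∀ i, Matrix (Fin (d i)) (Fin (d i)) ℝ} {b : ι → Prop}

/-- Tuples of probability densities from the classes `Sandwiched`. -/
def Normalized (R Q : ∀ i, Matrix (Fin (d i)) (Fin (d i)) ℝ) (b : ι → Prop)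
    (f : ∀ i, (Fin (d i) → ℝ) → ℝ) : Prop :=
  ∀ i, Sandwiched (R i) (Q i) (b i) (f i) ∧ ∫ x, f i x = 1

/-- The best constant in the Brascamp–Lieb inequality over the classes `Sandwiched`. -/
def blSup (C : ∀ i, Matrix (Fin (d i)) (Fin n) ℝ) (p : ι → ℝ) (𝒬 : Matrix (Fin n) (Fin n) ℝ)
    (R Q : ∀ i, Matrix (Fin (d i)) (Fin (d i)) ℝ) (b : ι → Prop) : ℝ≥0∞ :=
  ⨆ (f : ∀ i, (Fin (d i) → ℝ) → ℝ) (_ : Normalized R Q b f), blIntegral C p 𝒬 f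

theorem Normalized.blIntegral_le_blSup (hf : Normalized R Q b f) :
    blIntegral C p 𝒬 f ≤ blSup C p 𝒬 R Q b := le_iSup₂_of_le f hf le_rfl

theorem Normalized.blIntegrand_le (hp : ∀ i, 0 ≤ p i) (hR : ∀ i, (R i).PosDef)
    (hf : Normalized R Q b f) (x : Fin n → ℝ) :
    blIntegrand C p 𝒬 f x ≤ gaussFn 𝒬 x * ∏ i, √(R i).det ^ p i := by
  refine mul_le_mul_of_nonneg_left ?_ (gaussFn_pos _ _).le
  refine Finset.prod_le_prod (fun i _ ↦ Real.rpow_nonneg ((hf i).1.nonneg _) _) fun i _ ↦ ?_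
  refine Real.rpow_le_rpow ((hf i).1.nonneg _) ?_ (hp i)
  simpa [(hf i).2] using (hf i).1.le_mul_integral (hR i) (C i *ᵥ x)

theorem blSup_lt_top (hp : ∀ i, 0 ≤ p i) (h𝒬 : 𝒬.PosDef) (hR : ∀ i, (R i).PosDef) :
    blSup C p 𝒬 R Q b < ∞ := by
  have h_lt := ((integrable_gaussFn h𝒬).mul_const (∏ i, √(R i).det ^ p i)).lintegral_lt_top
  refine lt_of_le_of_lt (iSup₂_le fun f hf ↦ ?_) h_lt
  exact lintegral_mono fun x ↦ ENNReal.ofReal_le_ofReal (hf.blIntegrand_le hp hR x)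

theorem Sandwiched.eq_zero_of_integral_eq_zero {k : ℕ} {R Q : Matrix (Fin k) (Fin k) ℝ}
    {b : Prop} {f : (Fin k → ℝ) → ℝ} (hR : R.PosDef) (hf : Sandwiched R Q b f)
    (h_zero : ∫ x, f x = 0) (x : Fin k → ℝ) : f x = 0 :=
  le_antisymm (by simpa [h_zero] using hf.le_mul_integral hR x) (hf.nonneg x)

theorem blIntegral_le_blSup_mul (hp : ∀ i, 0 < p i) (hR : ∀ i, (R i).PosDef)
    (hf : ∀ i, Sandwiched (R i) (Q i) (b i) (f i)) :
    blIntegral C p 𝒬 f ≤ blSup C p 𝒬 R Q b * ∏ i, ENNReal.ofReal (∫ x, f i x) ^ p i := by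
  by_cases h_zero : ∃ i, ∫ x, f i x = 0
  · obtain ⟨i, hi⟩ := h_zero
    have h_integrand (x : Fin n → ℝ) : blIntegrand C p 𝒬 f x = 0 := by
      rw [blIntegrand, Finset.prod_eq_zero (Finset.mem_univ i), mul_zero]
      rw [(hf i).eq_zero_of_integral_eq_zero (hR i) hi, Real.zero_rpow (hp i).ne']
    simp [blIntegral, h_integrand]
  push Not at h_zero
  have h_norm : Normalized R Q b fun i x ↦ (∫ y, f i y)⁻¹ * f i x := fun i ↦
    ⟨(hf i).const_mul (inv_nonneg.2 (hf i).integral_nonneg), by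
      rw [integral_const_mul, inv_mul_cancel₀ (h_zero i)]⟩
  have h_scale := blIntegral_const_mul (C := C) (𝒬 := 𝒬) (fun i ↦ (hp i).le)
    (fun i x ↦ (h_norm i).1.nonneg x) fun i ↦ (hf i).integral_nonneg
  simp only [mul_inv_cancel_left₀ (h_zero _)] at h_scale
  rw [h_scale]
  gcongr
  exact h_norm.blIntegral_le_blSup

theorem blIntegral_mul_le (hp : ∀ i, 0 < p i) (hR : ∀ i, (R i).PosDef)
    (hf : ∀ i, Sandwiched (R i) (Q i) (b i) (f i)) (hg : ∀ i, Sandwiched (R i) (Q i) (b i) (g i)) :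
    blIntegral C p 𝒬 f * blIntegral C p 𝒬 g ≤
      blSup C p 𝒬 R Q b * blIntegral C p 𝒬 fun i ↦ circ (f i) (g i) := by
  have hp' (i) : 0 ≤ p i := (hp i).le
  have hf_nonneg (i x) : 0 ≤ f i x := (hf i).nonneg x
  have hg_nonneg (i x) : 0 ≤ g i x := (hg i).nonneg x
  have h_circ_cont (i) : Continuous (circ (f i) (g i)) :=
    ((hf i).convex.circ (hg i).convex ((hf i).integrable_rotMul (hR i) (hg i))).continuous
  have h_circ_nonneg (i x) : 0 ≤ circ (f i) (g i) x :=
    integral_nonneg fun w ↦ mul_nonneg (hf_nonneg i _) (hg_nonneg i _)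
  have h_meas {f : ∀ i, (Fin (d i) → ℝ) → ℝ} (hf : ∀ i, Continuous (f i)) :
      Measurable fun x ↦ ENNReal.ofReal (blIntegrand C p 𝒬 f x) :=
    (continuous_blIntegrand hp' hf).measurable.ennreal_ofReal
  have h_slice (u v : Fin n → ℝ) :
      ENNReal.ofReal (blIntegrand C p 𝒬 f ((√2)⁻¹ • (u + v))) *
          ENNReal.ofReal (blIntegrand C p 𝒬 g ((√2)⁻¹ • (u - v))) =
        ENNReal.ofReal (gaussFn 𝒬 u) *
          ENNReal.ofReal (blIntegrand C p 𝒬 (fun i ↦ rotMul (f i) (g i) (C i *ᵥ u)) v) := by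
    rw [← ENNReal.ofReal_mul (blIntegrand_nonneg hf_nonneg _),
      ← ENNReal.ofReal_mul (gaussFn_pos _ _).le, blIntegrand_mul_blIntegrand hf_nonneg hg_nonneg]
  calc blIntegral C p 𝒬 f * blIntegral C p 𝒬 g
      = ∫⁻ u, ENNReal.ofReal (gaussFn 𝒬 u) *
          blIntegral C p 𝒬 fun i ↦ rotMul (f i) (g i) (C i *ᵥ u) := by
        rw [blIntegral, blIntegral, lintegral_mul_lintegral_eq_lintegral_lintegral
          (h_meas fun i ↦ (hf i).continuous) (h_meas fun i ↦ (hg i).continuous)]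
        simp only [h_slice, lintegral_const_mul' _ _ ENNReal.ofReal_ne_top, blIntegral]
    _ ≤ ∫⁻ u, ENNReal.ofReal (gaussFn 𝒬 u) * (blSup C p 𝒬 R Q b *
          ∏ i, ENNReal.ofReal (circ (f i) (g i) (C i *ᵥ u)) ^ p i) := by
        gcongr with u
        exact blIntegral_le_blSup_mul hp hR fun i ↦ (hf i).rotMul (hR i) (hg i) _
    _ = blSup C p 𝒬 R Q b * blIntegral C p 𝒬 fun i ↦ circ (f i) (g i) := by
        rw [blIntegral, ← lintegral_const_mul _ (h_meas h_circ_cont)]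
        simp only [ofReal_blIntegrand hp' h_circ_nonneg, mul_left_comm]

end BrascampLieb

/-! ### Compactness and existence of extremizers -/

section ConvexCompactness

theorem exists_strictMono_forall_exists_tendsto {κ : Type*} [Countable κ] {u : ℕ → κ → ℝ}
    {M : κ → ℝ} (hM : ∀ j i, |u j i| ≤ M i) :
    ∃ φ : ℕ → ℕ, StrictMono φ ∧ ∀ i, ∃ y, Tendsto (fun j ↦ u (φ j) i) atTop (𝓝 y) := by
  have h_compact : IsCompact (Set.univ.pi fun i ↦ Set.Icc (-M i) (M i)) :=
    isCompact_univ_pi fun _ ↦ isCompact_Icc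
  obtain ⟨y, -, φ, hφ, hy⟩ := h_compact.tendsto_subseq (x := u) fun j i _ ↦ abs_le.1 (hM j i)
  exact ⟨φ, hφ, fun i ↦ ⟨y i, tendsto_pi_nhds.1 hy i⟩⟩

theorem equicontinuous_of_convexOn_of_abs_le {κ E : Type*} [NormedAddCommGroup E] [NormedSpace ℝ E]
    {h : κ → E → ℝ} {M : E → ℝ} (hh : ∀ j, ConvexOn ℝ Set.univ (h j))
    (hM : ∀ j x, |h j x| ≤ M x) (hM_cont : Continuous M) : Equicontinuous h := by
  intro x
  obtain ⟨r, hr, h_ball⟩ := Metric.eventually_nhds_iff_ball.1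
    (hM_cont.continuousAt.eventually_lt continuousAt_const (lt_add_one (M x)))
  have h_lip (j : κ) : LipschitzOnWith (2 * (M x + 1) / (r / 2)).toNNReal (h j)
      (Metric.ball x (r - r / 2)) :=
    ((hh j).subset (Set.subset_univ _) (convex_ball x r)).lipschitzOnWith_of_abs_le (half_pos hr)
      fun y hy ↦ (hM j y).trans (h_ball y hy).le
  have h_half : 0 < r - r / 2 := by linarith
  refine Metric.equicontinuousAt_of_continuity_modulus
    (fun y ↦ (2 * (M x + 1) / (r / 2)).toNNReal * dist x y) ?_ _ ?_
  · have h_cont : Continuous fun y ↦ (2 * (M x + 1) / (r / 2)).toNNReal * dist x y := by fun_prop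
    simpa using h_cont.tendsto x
  · filter_upwards [Metric.ball_mem_nhds x h_half] with y hy j
    exact (h_lip j).dist_le_mul x (Metric.mem_ball_self h_half) y hy

theorem exists_tendsto_of_equicontinuousAt {X α : Type*} [TopologicalSpace X]
    [PseudoMetricSpace α] [CompleteSpace α] {F : ℕ → X → α} {x : X} (hF : EquicontinuousAt F x)
    {s : Set X} (hx : x ∈ closure s) (hs : ∀ q ∈ s, ∃ y, Tendsto (fun j ↦ F j q) atTop (𝓝 y)) :
    ∃ y, Tendsto (fun j ↦ F j x) atTop (𝓝 y) := by
  refine cauchySeq_tendsto_of_complete (Metric.cauchySeq_iff'.2 fun ε hε ↦ ?_)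
  obtain ⟨q, hq, hqs⟩ := mem_closure_iff_nhds.1 hx _
    (Metric.equicontinuousAt_iff_right.1 hF (ε / 3) (by positivity))
  obtain ⟨y, hy⟩ := hs q hqs
  obtain ⟨N, hN⟩ := Metric.cauchySeq_iff'.1 hy.cauchySeq (ε / 3) (by positivity)
  refine ⟨N, fun j hj ↦ ?_⟩
  calc dist (F j x) (F N x) ≤ dist (F j x) (F j q) + dist (F j q) (F N q) + dist (F N q) (F N x) :=
        dist_triangle4 _ _ _ _
    _ < ε / 3 + ε / 3 + ε / 3 :=
        add_lt_add (add_lt_add (hq j) (hN j hj)) (dist_comm (F N q) _ ▸ hq N)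
    _ = ε := add_thirds ε

theorem exists_strictMono_tendsto_of_convexOn {κ : Type*} [Countable κ] {E : κ → Type*}
    [∀ i, NormedAddCommGroup (E i)] [∀ i, NormedSpace ℝ (E i)]
    [∀ i, TopologicalSpace.SeparableSpace (E i)] {h : ℕ → ∀ i, E i → ℝ} {M : ∀ i, E i → ℝ}
    (hh : ∀ j i, ConvexOn ℝ Set.univ (h j i)) (hM : ∀ j i x, |h j i x| ≤ M i x)
    (hM_cont : ∀ i, Continuous (M i)) :
    ∃ φ : ℕ → ℕ, StrictMono φ ∧ ∀ i x, ∃ y, Tendsto (fun j ↦ h (φ j) i x) atTop (𝓝 y) := by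
  obtain ⟨φ, hφ, h_dense⟩ := exists_strictMono_forall_exists_tendsto (κ := κ × ℕ)
    (u := fun j q ↦ h j q.1 (TopologicalSpace.denseSeq (E q.1) q.2)) fun j q ↦ hM j q.1 _
  refine ⟨φ, hφ, fun i x ↦ ?_⟩
  refine exists_tendsto_of_equicontinuousAt
    (equicontinuous_of_convexOn_of_abs_le (fun j ↦ hh (φ j) i) (fun j ↦ hM (φ j) i) (hM_cont i) x)
    (TopologicalSpace.denseRange_denseSeq (E i) x) ?_
  rintro _ ⟨q, rfl⟩
  exact h_dense (i, q)

end ConvexCompactness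

theorem integrable_and_integral_le_of_tendsto {α : Type*} [MeasurableSpace α] {μ : Measure α}
    {F : ℕ → α → ℝ} {f : α → ℝ} {c : ℝ} (hF : ∀ j, Integrable (F j) μ)
    (hF_nonneg : ∀ j x, 0 ≤ F j x) (hF_le : ∀ j, ∫ x, F j x ∂μ ≤ c)
    (h_lim : ∀ x, Tendsto (fun j ↦ F j x) atTop (𝓝 (f x))) :
    Integrable f μ ∧ ∫ x, f x ∂μ ≤ c := by
  have hf_nonneg (x) : 0 ≤ f x := ge_of_tendsto' (h_lim x) fun j ↦ hF_nonneg j x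
  have hf_meas : AEStronglyMeasurable f μ :=
    aestronglyMeasurable_of_tendsto_ae atTop (fun j ↦ (hF j).1) (.of_forall h_lim)
  have h_fatou : ∫⁻ x, ENNReal.ofReal (f x) ∂μ ≤ ENNReal.ofReal c := by
    calc ∫⁻ x, ENNReal.ofReal (f x) ∂μ
        = ∫⁻ x, liminf (fun j ↦ ENNReal.ofReal (F j x)) atTop ∂μ :=
          lintegral_congr fun x ↦ (ENNReal.tendsto_ofReal (h_lim x)).liminf_eq.symm
      _ ≤ liminf (fun j ↦ ∫⁻ x, ENNReal.ofReal (F j x) ∂μ) atTop :=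
          lintegral_liminf_le' fun j ↦ (hF j).1.aemeasurable.ennreal_ofReal
      _ ≤ ENNReal.ofReal c := by
          refine liminf_le_of_le ⟨0, by simp⟩ fun y hy ↦ ?_
          obtain ⟨j, hj⟩ := hy.exists
          refine hj.trans ?_
          rw [← ofReal_integral_eq_lintegral_ofReal (hF j) (.of_forall (hF_nonneg j))]
          exact ENNReal.ofReal_le_ofReal (hF_le j)
  have hf_int : Integrable f μ := ⟨hf_meas,
    (hasFiniteIntegral_iff_ofReal (.of_forall hf_nonneg)).2
      (h_fatou.trans_lt ENNReal.ofReal_lt_top)⟩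
  refine ⟨hf_int, ?_⟩
  have hc : 0 ≤ c := (integral_nonneg (hF_nonneg 0)).trans (hF_le 0)
  rwa [← ofReal_integral_eq_lintegral_ofReal hf_int (.of_forall hf_nonneg),
    ENNReal.ofReal_le_ofReal_iff hc] at h_fatou

theorem Normalized.exists_subseq_tendsto {ι : Type*} [Countable ι] {d : ι → ℕ}
    {R Q : ∀ i, Matrix (Fin (d i)) (Fin (d i)) ℝ} {b : ι → Prop} (hR : ∀ i, (R i).PosDef)
    {F : ℕ → ∀ i, (Fin (d i) → ℝ) → ℝ} (hF : ∀ j, Normalized R Q b (F j)) :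
    ∃ (φ : ℕ → ℕ) (f : ∀ i, (Fin (d i) → ℝ) → ℝ), StrictMono φ ∧
      (∀ i x, Tendsto (fun j ↦ F (φ j) i x) atTop (𝓝 (f i x))) ∧
      ∀ i, Sandwiched (R i) (Q i) (b i) (f i) ∧ ∫ x, f i x ≤ 1 := by
  have h_convex (j i) := moreLogConvex_iff.1 (hF j i).1.convex
  have h_le (j i x) : F j i x / gaussFn (R i) x ≤ √(R i).det / gaussFn (R i) x := by
    have := (hF j i).1.le_mul_integral (hR i) x
    rw [(hF j i).2, mul_one] at this
    exact div_le_div_of_nonneg_right this (gaussFn_pos _ _).le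
  obtain ⟨φ, hφ, h_exists⟩ := exists_strictMono_tendsto_of_convexOn
    (fun j i ↦ (h_convex j i).convexOn)
    (fun j i x ↦ (abs_of_nonneg ((h_convex j i).1 x)).trans_le (h_le j i x))
    fun i ↦ continuous_const.div (continuous_gaussFn _) fun x ↦ (gaussFn_pos _ x).ne'
  choose h h_lim using h_exists
  have h_tendsto (i x) : Tendsto (fun j ↦ F (φ j) i x) atTop (𝓝 (gaussFn (R i) x * h i x)) := by
    simpa only [mul_div_cancel₀ _ (gaussFn_pos _ _).ne'] using
      (h_lim i x).const_mul (gaussFn (R i) x)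
  have h_fatou (i) := integrable_and_integral_le_of_tendsto
    (fun j ↦ (hF (φ j) i).1.integrable) (fun j ↦ (hF (φ j) i).1.nonneg)
    (fun j ↦ (hF (φ j) i).2.le) (h_tendsto i)
  exact ⟨φ, _, hφ, h_tendsto, fun i ↦ ⟨⟨.of_tendsto (fun j ↦ (hF (φ j) i).1.convex) (h_tendsto i),
    fun hb ↦ .of_tendsto (fun j ↦ (hF (φ j) i).1.concave hb) (h_tendsto i), (h_fatou i).1⟩,
    (h_fatou i).2⟩⟩

section Extremizers

variable {ι : Type*} [Fintype ι] {n : ℕ} {d : ι → ℕ} {C : ∀ i, Matrix (Fin (d i)) (Fin n) ℝ}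
  {p : ι → ℝ} {𝒬 : Matrix (Fin n) (Fin n) ℝ} {f g : ∀ i, (Fin (d i) → ℝ) → ℝ}
  {R Q : ∀ i, Matrix (Fin (d i)) (Fin (d i)) ℝ} {b : ι → Prop}

theorem tendsto_blIntegral (hp : ∀ i, 0 ≤ p i) (h𝒬 : 𝒬.PosDef) (hR : ∀ i, (R i).PosDef)
    {F : ℕ → ∀ i, (Fin (d i) → ℝ) → ℝ} (hF : ∀ j, Normalized R Q b (F j))
    (h_lim : ∀ i x, Tendsto (fun j ↦ F j i x) atTop (𝓝 (f i x))) :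
    Tendsto (fun j ↦ blIntegral C p 𝒬 (F j)) atTop (𝓝 (blIntegral C p 𝒬 f)) := by
  refine tendsto_lintegral_of_dominated_convergence
    (fun x ↦ ENNReal.ofReal (gaussFn 𝒬 x * ∏ i, √(R i).det ^ p i))
    (fun j ↦ (continuous_blIntegrand hp fun i ↦ (hF j i).1.continuous).measurable.ennreal_ofReal)
    (fun j ↦ .of_forall fun x ↦ ENNReal.ofReal_le_ofReal ((hF j).blIntegrand_le hp hR x))
    ((integrable_gaussFn h𝒬).mul_const _).lintegral_lt_top.ne (.of_forall fun x ↦ ?_)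
  exact ENNReal.tendsto_ofReal <| Tendsto.const_mul _ <|
    tendsto_finsetProd _ fun i _ ↦ (h_lim i _).rpow_const (.inr (hp i))

/-- Normalized tuples attaining the best constant `blSup`. -/
structure IsExtremizer (C : ∀ i, Matrix (Fin (d i)) (Fin n) ℝ) (p : ι → ℝ)
    (𝒬 : Matrix (Fin n) (Fin n) ℝ) (R Q : ∀ i, Matrix (Fin (d i)) (Fin (d i)) ℝ) (b : ι → Prop)
    (f : ∀ i, (Fin (d i) → ℝ) → ℝ) : Prop where
  normalized : Normalized R Q b f
  blIntegral_eq : blIntegral C p 𝒬 f = blSup C p 𝒬 R Q b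

theorem Normalized.of_blSup_le_blIntegral (hp : ∀ i, 0 < p i) (hR : ∀ i, (R i).PosDef)
    (h_zero : blSup C p 𝒬 R Q b ≠ 0) (h_top : blSup C p 𝒬 R Q b ≠ ∞)
    (hf : ∀ i, Sandwiched (R i) (Q i) (b i) (f i)) (hf_le : ∀ i, ∫ x, f i x ≤ 1)
    (h_le : blSup C p 𝒬 R Q b ≤ blIntegral C p 𝒬 f) : Normalized R Q b f := by
  classical
  refine fun i ↦ ⟨hf i, (hf_le i).antisymm (not_lt.1 fun h_lt ↦ h_le.not_gt ?_)⟩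
  have h_prod : ∏ j, ENNReal.ofReal (∫ x, f j x) ^ p j < 1 := by
    rw [← Finset.mul_prod_erase _ _ (Finset.mem_univ i)]
    refine lt_of_le_of_lt (mul_le_of_le_one_right' (Finset.prod_le_one' fun j _ ↦ ?_)) ?_
    · exact ENNReal.rpow_le_one (ENNReal.ofReal_le_one.2 (hf_le j)) (hp j).le
    · exact ENNReal.rpow_lt_one (by simpa using h_lt) (hp i)
  calc blIntegral C p 𝒬 f ≤ blSup C p 𝒬 R Q b * ∏ j, ENNReal.ofReal (∫ x, f j x) ^ p j :=
        blIntegral_le_blSup_mul hp hR hf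
    _ < blSup C p 𝒬 R Q b := by
        simpa using ENNReal.mul_lt_mul_right h_zero h_top h_prod

theorem exists_subseq_tendsto_isExtremizer (hp : ∀ i, 0 < p i) (h𝒬 : 𝒬.PosDef)
    (hR : ∀ i, (R i).PosDef) (h_zero : blSup C p 𝒬 R Q b ≠ 0)
    {F : ℕ → ∀ i, (Fin (d i) → ℝ) → ℝ} (hF : ∀ j, Normalized R Q b (F j))
    (h_lim : Tendsto (fun j ↦ blIntegral C p 𝒬 (F j)) atTop (𝓝 (blSup C p 𝒬 R Q b))) :
    ∃ (φ : ℕ → ℕ) (f : ∀ i, (Fin (d i) → ℝ) → ℝ), StrictMono φ ∧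
      (∀ i x, Tendsto (fun j ↦ F (φ j) i x) atTop (𝓝 (f i x))) ∧
      IsExtremizer C p 𝒬 R Q b f := by
  have hp' (i) : 0 ≤ p i := (hp i).le
  obtain ⟨φ, f, hφ, hf_lim, hf⟩ := Normalized.exists_subseq_tendsto hR hF
  have h_eq : blIntegral C p 𝒬 f = blSup C p 𝒬 R Q b :=
    tendsto_nhds_unique (tendsto_blIntegral hp' h𝒬 hR (fun j ↦ hF (φ j)) hf_lim)
      (h_lim.comp hφ.tendsto_atTop)
  exact ⟨φ, f, hφ, hf_lim, .of_blSup_le_blIntegral hp hR h_zero (blSup_lt_top hp' h𝒬 hR).ne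
    (fun i ↦ (hf i).1) (fun i ↦ (hf i).2) h_eq.ge, h_eq⟩

theorem exists_isExtremizer (hp : ∀ i, 0 < p i) (h𝒬 : 𝒬.PosDef) (hR : ∀ i, (R i).PosDef)
    (h_zero : blSup C p 𝒬 R Q b ≠ 0) : ∃ f, IsExtremizer C p 𝒬 R Q b f := by
  have h_exists : ∀ c < blSup C p 𝒬 R Q b, ∃ f, Normalized R Q b f ∧ c < blIntegral C p 𝒬 f := by
    simp [blSup, lt_iSup_iff]
  obtain ⟨u, -, hu, hu_lim⟩ := exists_seq_strictMono_tendsto' (pos_iff_ne_zero.2 h_zero)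
  choose F hF hF_lt using fun j ↦ h_exists (u j) (hu j).2
  obtain ⟨_, f, -, -, hf⟩ := exists_subseq_tendsto_isExtremizer hp h𝒬 hR h_zero hF
    (tendsto_of_tendsto_of_tendsto_of_le_of_le hu_lim tendsto_const_nhds (fun j ↦ (hF_lt j).le)
      fun j ↦ (hF j).blIntegral_le_blSup)
  exact ⟨f, hf⟩

namespace IsExtremizer

protected theorem circ (hp : ∀ i, 0 < p i) (h𝒬 : 𝒬.PosDef) (hR : ∀ i, (R i).PosDef)
    (hQ : ∀ i, (Q i).PosSemidef) (h_zero : blSup C p 𝒬 R Q b ≠ 0)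
    (hf : IsExtremizer C p 𝒬 R Q b f) (hg : IsExtremizer C p 𝒬 R Q b g) :
    IsExtremizer C p 𝒬 R Q b fun i ↦ circ (f i) (g i) := by
  have h_norm : Normalized R Q b fun i ↦ circ (f i) (g i) := fun i ↦
    have hf_i := hf.normalized i
    have hg_i := hg.normalized i
    ⟨hf_i.1.circ (hR i) (hQ i) hg_i.1, by
      rw [integral_circ hf_i.1.integrable hg_i.1.integrable, hf_i.2, hg_i.2, one_mul]⟩
  have h_ball := blIntegral_mul_le (C := C) (𝒬 := 𝒬) hp hR (fun i ↦ (hf.normalized i).1)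
    fun i ↦ (hg.normalized i).1
  rw [hf.blIntegral_eq, hg.blIntegral_eq, ENNReal.mul_le_mul_iff_right h_zero
    (blSup_lt_top (fun i ↦ (hp i).le) h𝒬 hR).ne] at h_ball
  exact ⟨h_norm, h_norm.blIntegral_le_blSup.antisymm h_ball⟩

theorem comp_neg (hf : IsExtremizer C p 𝒬 R Q b f) :
    IsExtremizer C p 𝒬 R Q b fun i x ↦ f i (-x) where
  normalized i := ⟨(hf.normalized i).1.comp_neg, by
    rw [integral_neg_eq_self, (hf.normalized i).2]⟩
  blIntegral_eq := by
    rw [← hf.blIntegral_eq, blIntegral, blIntegral, ← lintegral_neg_eq_self]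
    simp [blIntegrand, gaussFn_neg, mulVec_neg]

end IsExtremizer

end Extremizers

/-! ### Characteristic functions of densities -/

section CharDensity

section Measure

variable {α : Type*} [MeasurableSpace α] {μ : Measure α} {f : α → ℝ}

theorem integral_withDensity_ofReal {F : Type*} [NormedAddCommGroup F] [NormedSpace ℝ F]
    (hf : AEMeasurable f μ) (hf_nonneg : 0 ≤ f) (u : α → F) :
    ∫ x, u x ∂μ.withDensity (fun x ↦ ENNReal.ofReal (f x)) = ∫ x, f x • u x ∂μ := by
  rw [integral_withDensity_eq_integral_toReal_smul₀ hf.ennreal_ofReal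
    (.of_forall fun _ ↦ ENNReal.ofReal_lt_top)]
  simp only [ENNReal.toReal_ofReal (hf_nonneg _)]

theorem isProbabilityMeasure_withDensity_ofReal (hf : Integrable f μ) (hf_nonneg : 0 ≤ f)
    (hf_one : ∫ x, f x ∂μ = 1) :
    IsProbabilityMeasure (μ.withDensity fun x ↦ ENNReal.ofReal (f x)) := by
  constructor
  rw [withDensity_apply _ .univ, Measure.restrict_univ,
    ← ofReal_integral_eq_lintegral_ofReal hf (.of_forall hf_nonneg), hf_one, ENNReal.ofReal_one]

theorem tendsto_integral_abs_sub {F : ℕ → α → ℝ} {g : α → ℝ} (hF : ∀ k, Integrable (F k) μ)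
    (hg : Integrable g μ) (hF_nonneg : ∀ k, 0 ≤ᵐ[μ] F k)
    (h_int : Tendsto (fun k ↦ ∫ x, F k x ∂μ) atTop (𝓝 (∫ x, g x ∂μ)))
    (h_lim : ∀ᵐ x ∂μ, Tendsto (fun k ↦ F k x) atTop (𝓝 (g x))) :
    Tendsto (fun k ↦ ∫ x, |F k x - g x| ∂μ) atTop (𝓝 0) := by
  have h_pos_part (k) : Integrable (fun x ↦ max (g x - F k x) 0) μ := (hg.sub (hF k)).pos_part
  have h_pos : Tendsto (fun k ↦ ∫ x, max (g x - F k x) 0 ∂μ) atTop (𝓝 (∫ _, 0 ∂μ)) := by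
    refine tendsto_integral_of_dominated_convergence (fun x ↦ |g x|)
      (fun k ↦ (h_pos_part k).aestronglyMeasurable) hg.abs (fun k ↦ ?_) ?_
    · filter_upwards [hF_nonneg k] with x hx
      have hx' : 0 ≤ F k x := hx
      rw [Real.norm_of_nonneg (le_max_right _ _)]
      exact max_le (by linarith [le_abs_self (g x)]) (abs_nonneg _)
    · filter_upwards [h_lim] with x hx
      simpa using ((tendsto_const_nhds (x := g x)).sub hx).max (tendsto_const_nhds (x := 0))
  have h_abs (k x) : |F k x - g x| = 2 * max (g x - F k x) 0 + (F k x - g x) := by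
    rcases le_total (F k x) (g x) with h | h
    · rw [abs_of_nonpos (by linarith), max_eq_left (by linarith)]
      ring
    · rw [abs_of_nonneg (by linarith), max_eq_right (by linarith)]
      ring
  have h_eq (k) : ∫ x, |F k x - g x| ∂μ =
      2 * ∫ x, max (g x - F k x) 0 ∂μ + (∫ x, F k x ∂μ - ∫ x, g x ∂μ) := by
    have h_sub : Integrable (fun x ↦ F k x - g x) μ := (hF k).sub hg
    simp only [h_abs]
    rw [integral_add ((h_pos_part k).const_mul 2) h_sub, integral_const_mul,
      integral_sub (hF k) hg]
  simp only [h_eq]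
  simpa using (h_pos.const_mul 2).add (h_int.sub_const (∫ x, g x ∂μ))

end Measure

variable {d : ℕ} {f g : (Fin d → ℝ) → ℝ}

/-- The characteristic function of the measure with density `f`. -/
def charDensity (f : (Fin d → ℝ) → ℝ) (c : Fin d → ℝ) : ℂ :=
  ∫ x, (f x : ℂ) * Complex.exp ((c ⬝ᵥ x : ℝ) * Complex.I)

theorem continuous_cexp_dotProduct_mul_I (c : Fin d → ℝ) :
    Continuous fun x : Fin d → ℝ ↦ Complex.exp ((c ⬝ᵥ x : ℝ) * Complex.I) := by
  fun_prop

theorem integrable_mul_cexp (hf : Integrable f) (c : Fin d → ℝ) :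
    Integrable fun x ↦ (f x : ℂ) * Complex.exp ((c ⬝ᵥ x : ℝ) * Complex.I) :=
  (hf.ofReal (𝕜 := ℂ)).mul_bdd (continuous_cexp_dotProduct_mul_I c).aestronglyMeasurable
    (.of_forall fun _ ↦ (Complex.norm_exp_ofReal_mul_I _).le)

theorem charDensity_circ (hf : Integrable f) (hg : Integrable g) (c : Fin d → ℝ) :
    charDensity (circ f g) c = charDensity f ((√2)⁻¹ • c) * charDensity g ((√2)⁻¹ • c) := by
  rw [charDensity, integral_circ_mul hf hg (continuous_cexp_dotProduct_mul_I c) fun _ ↦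
    (Complex.norm_exp_ofReal_mul_I _).le, charDensity, charDensity, ← integral_mul_const]
  refine integral_congr_ae (.of_forall fun x ↦ ?_)
  dsimp only
  rw [← integral_const_mul]
  refine integral_congr_ae (.of_forall fun y ↦ ?_)
  simp only [smul_dotProduct, dotProduct_smul, dotProduct_add, smul_eq_mul, Complex.ofReal_mul,
    Complex.ofReal_add, mul_add, add_mul, Complex.exp_add]
  ring

/-- The density of `(X + Y) / √2` for independent `X`, `Y` with density `f`. -/
def selfCirc (f : (Fin d → ℝ) → ℝ) : (Fin d → ℝ) → ℝ := circ f f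

theorem integrable_selfCirc_iterate (hf : Integrable f) (k : ℕ) : Integrable (selfCirc^[k] f) := by
  induction k with
  | zero => exact hf
  | succ k ih =>
    rw [Function.iterate_succ_apply']
    exact integrable_circ ih ih

theorem charDensity_selfCirc_iterate (hf : Integrable f) (k : ℕ) (c : Fin d → ℝ) :
    charDensity (selfCirc^[k] f) c = charDensity f ((√2)⁻¹ ^ k • c) ^ 2 ^ k := by
  induction k generalizing c with
  | zero => simp
  | succ k ih =>
    have h_int := integrable_selfCirc_iterate hf k
    rw [Function.iterate_succ_apply', selfCirc, charDensity_circ h_int h_int, ih, smul_smul,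
      ← pow_succ, ← pow_two, ← pow_mul, ← pow_succ]

theorem charDensity_of_even (hf : Integrable f) (hf_even : f.Even) (c : Fin d → ℝ) :
    charDensity f c = (∫ x, f x * Real.cos (c ⬝ᵥ x) : ℝ) := by
  have h_re : (charDensity f c).re = ∫ x, f x * Real.cos (c ⬝ᵥ x) := by
    rw [charDensity, ← RCLike.re_eq_complex_re, ← integral_re (integrable_mul_cexp hf c)]
    simp [Complex.exp_ofReal_mul_I_re]
  have h_im : (charDensity f c).im = 0 := by
    have h_odd := integral_neg_eq_self (fun x ↦ f x * Real.sin (c ⬝ᵥ x)) volume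
    simp only [hf_even.eq, dotProduct_neg, Real.sin_neg, mul_neg, integral_neg] at h_odd
    rw [charDensity, ← RCLike.im_eq_complex_im, ← integral_im (integrable_mul_cexp hf c)]
    simp only [RCLike.im_eq_complex_im, Complex.im_ofReal_mul, Complex.exp_ofReal_mul_I_im]
    linarith
  exact Complex.ext h_re h_im

theorem charFunDual_withDensity_ofReal (hf : AEMeasurable f) (hf_nonneg : 0 ≤ f)
    (L : StrongDual ℝ (Fin d → ℝ)) :
    charFunDual (volume.withDensity fun x ↦ ENNReal.ofReal (f x)) L =
      charDensity f fun i ↦ L (Pi.single i 1) := by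
  have h_apply (x) : L x = (fun i ↦ L (Pi.single i 1)) ⬝ᵥ x := by
    conv_lhs => rw [pi_eq_sum_univ' x, map_sum]
    simp [dotProduct, mul_comm]
  rw [charFunDual_apply, integral_withDensity_ofReal hf hf_nonneg, charDensity]
  exact integral_congr_ae (.of_forall fun x ↦ by simp only [← h_apply, Complex.real_smul])

theorem ae_eq_of_charDensity_eq (hf : Integrable f) (hg : Integrable g) (hf_nonneg : 0 ≤ f)
    (hg_nonneg : 0 ≤ g) (h_eq : charDensity f = charDensity g) : f =ᵐ[volume] g := by
  have := isFiniteMeasure_withDensity_ofReal hf.2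
  have := isFiniteMeasure_withDensity_ofReal hg.2
  have h_measure : (volume.withDensity fun x ↦ ENNReal.ofReal (f x)) =
      volume.withDensity fun x ↦ ENNReal.ofReal (g x) := by
    refine Measure.ext_of_charFunDual (funext fun L ↦ ?_)
    rw [charFunDual_withDensity_ofReal hf.aemeasurable hf_nonneg,
      charFunDual_withDensity_ofReal hg.aemeasurable hg_nonneg, h_eq]
  filter_upwards [(withDensity_eq_iff_of_sigmaFinite hf.aemeasurable.ennreal_ofReal
    hg.aemeasurable.ennreal_ofReal).1 h_measure] with x hx
  exact (ENNReal.ofReal_eq_ofReal_iff (hf_nonneg x) (hg_nonneg x)).1 hx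

theorem norm_charDensity_sub_le (hf : Integrable f) (hg : Integrable g) (c : Fin d → ℝ) :
    ‖charDensity f c - charDensity g c‖ ≤ ∫ x, |f x - g x| := by
  rw [charDensity, charDensity,
    ← integral_sub (integrable_mul_cexp hf c) (integrable_mul_cexp hg c)]
  refine (norm_integral_le_integral_norm _).trans_eq ?_
  simp only [← sub_mul, norm_mul, Complex.norm_exp_ofReal_mul_I, mul_one, ← Complex.ofReal_sub,
    Complex.norm_real, Real.norm_eq_abs]

theorem tendsto_charDensity {F : ℕ → (Fin d → ℝ) → ℝ} (hF : ∀ k, Integrable (F k))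
    (hg : Integrable g) (h_lim : Tendsto (fun k ↦ ∫ x, |F k x - g x|) atTop (𝓝 0))
    (c : Fin d → ℝ) : Tendsto (fun k ↦ charDensity (F k) c) atTop (𝓝 (charDensity g c)) :=
  tendsto_iff_norm_sub_tendsto_zero.2 <|
    squeeze_zero (fun _ ↦ norm_nonneg _) (fun k ↦ norm_charDensity_sub_le (hF k) hg c) h_lim

end CharDensity

/-! ### The central limit theorem for cosine transforms -/

section CentralLimit

theorem mul_one_sub_cos_inv_sqrt_mul {n : ℕ} (hn : n ≠ 0) (t : ℝ) :
    n * (1 - Real.cos ((√n)⁻¹ * t)) = t ^ 2 / 2 * Real.sinc ((√n)⁻¹ * t / 2) ^ 2 := by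
  have h_sq : √(n : ℝ) ^ 2 = n := Real.sq_sqrt n.cast_nonneg
  have h_cos : 1 - Real.cos ((√n)⁻¹ * t) = 2 * Real.sin ((√n)⁻¹ * t / 2) ^ 2 := by
    rw [Real.sin_sq_eq_half_sub]
    ring_nf
  rw [h_cos]
  rcases eq_or_ne t 0 with rfl | ht
  · simp
  · rw [Real.sinc_of_ne_zero (by positivity)]
    field_simp
    rw [h_sq]

theorem tendsto_inv_sqrt_natCast : Tendsto (fun n : ℕ ↦ (√n : ℝ)⁻¹) atTop (𝓝 0) :=
  tendsto_inv_atTop_zero.comp (Real.tendsto_sqrt_atTop.comp tendsto_natCast_atTop_atTop)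

theorem tendsto_mul_one_sub_cos_inv_sqrt_mul (t : ℝ) :
    Tendsto (fun n : ℕ ↦ n * (1 - Real.cos ((√n)⁻¹ * t))) atTop (𝓝 (t ^ 2 / 2)) := by
  have h_sinc : Tendsto (fun n : ℕ ↦ t ^ 2 / 2 * Real.sinc ((√(n : ℝ))⁻¹ * t / 2) ^ 2) atTop
      (𝓝 (t ^ 2 / 2 * Real.sinc (0 * t / 2) ^ 2)) :=
    (((Real.continuous_sinc.tendsto _).comp
      ((tendsto_inv_sqrt_natCast.mul_const t).div_const 2)).pow 2).const_mul _
  simp only [zero_mul, zero_div, Real.sinc_zero, one_pow, mul_one] at h_sinc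
  refine h_sinc.congr' ?_
  filter_upwards [eventually_ne_atTop 0] with n hn
  rw [mul_one_sub_cos_inv_sqrt_mul hn]

theorem mul_one_sub_cos_inv_sqrt_mul_nonneg (n : ℕ) (t : ℝ) :
    0 ≤ n * (1 - Real.cos ((√n)⁻¹ * t)) :=
  mul_nonneg n.cast_nonneg (sub_nonneg.2 (Real.cos_le_one _))

theorem mul_one_sub_cos_inv_sqrt_mul_le (n : ℕ) (t : ℝ) :
    n * (1 - Real.cos ((√n)⁻¹ * t)) ≤ t ^ 2 / 2 := by
  rcases eq_or_ne n 0 with rfl | hn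
  · simpa using div_nonneg (sq_nonneg t) zero_le_two
  · rw [mul_one_sub_cos_inv_sqrt_mul hn]
    exact mul_le_of_le_one_right (by positivity)
      ((sq_le_one_iff_abs_le_one _).2 (Real.abs_sinc_le_one _))

theorem eventually_mul_one_sub_lt_of_tendsto_pow {N : ℕ → ℕ} {a : ℕ → ℝ} {y c : ℝ} (hy : 0 < y)
    (hc : -Real.log y < c) (ha : Tendsto a atTop (𝓝 1))
    (h_pow : Tendsto (fun j ↦ a j ^ N j) atTop (𝓝 y)) : ∀ᶠ j in atTop, N j * (1 - a j) < c := by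
  filter_upwards [ha.eventually_const_lt one_pos, (h_pow.log hy.ne').neg.eventually_lt_const hc]
    with j h_pos h_lt
  rw [Real.log_pow] at h_lt
  nlinarith [Real.log_le_sub_one_of_pos h_pos, (N j).cast_nonneg (α := ℝ)]

variable {Ω : Type*} [MeasurableSpace Ω] {P : Measure Ω} [IsProbabilityMeasure P] {X : Ω → ℝ}

theorem integrable_cos_mul (hX : AEStronglyMeasurable X P) (t : ℝ) :
    Integrable (fun ω ↦ Real.cos (t * X ω)) P :=
  .of_bound (Real.continuous_cos.comp_aestronglyMeasurable (hX.const_mul t)) 1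
    (.of_forall fun _ ↦ Real.abs_cos_le_one _)

theorem tendsto_integral_cos_mul (hX : AEStronglyMeasurable X P) {t : ℕ → ℝ}
    (ht : Tendsto t atTop (𝓝 0)) :
    Tendsto (fun j ↦ ∫ ω, Real.cos (t j * X ω) ∂P) atTop (𝓝 1) := by
  have h_lim : Tendsto (fun j ↦ ∫ ω, Real.cos (t j * X ω) ∂P) atTop (𝓝 (∫ _, 1 ∂P)) :=
    tendsto_integral_of_dominated_convergence (fun _ ↦ 1)
      (fun j ↦ (integrable_cos_mul hX (t j)).aestronglyMeasurable) (integrable_const 1)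
      (fun _ ↦ .of_forall fun _ ↦ Real.abs_cos_le_one _) (.of_forall fun ω ↦ by
        simpa [Function.comp_def] using
          (Real.continuous_cos.tendsto _).comp (ht.mul_const (X ω)))
  simpa using h_lim

theorem mul_one_sub_integral_cos (hX : AEStronglyMeasurable X P) (n : ℕ) :
    n * (1 - ∫ ω, Real.cos ((√n)⁻¹ * X ω) ∂P) =
      ∫ ω, n * (1 - Real.cos ((√n)⁻¹ * X ω)) ∂P := by
  rw [integral_const_mul, integral_sub (integrable_const 1) (integrable_cos_mul hX _)]
  simp

-- The elementary bound `n (1 - a) ≤ -log (a ^ n)` makes Fatou's lemma applicable to the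
-- approximations `n (1 - cos (X / √n))` of `X ^ 2 / 2`.
theorem integrable_sq_of_tendsto_integral_cos_pow (hX : AEStronglyMeasurable X P) {N : ℕ → ℕ}
    (hN : Tendsto N atTop atTop) {y : ℝ} (hy : 0 < y)
    (h_lim : Tendsto (fun j ↦ (∫ ω, Real.cos ((√(N j))⁻¹ * X ω) ∂P) ^ N j) atTop (𝓝 y)) :
    Integrable (fun ω ↦ X ω ^ 2) P := by
  obtain ⟨J, hJ⟩ := eventually_atTop.1 <| eventually_mul_one_sub_lt_of_tendsto_pow hy
    (lt_add_one _) (tendsto_integral_cos_mul hX (tendsto_inv_sqrt_natCast.comp hN)) h_lim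
  have h_half := (integrable_and_integral_le_of_tendsto (μ := P)
    (F := fun j ω ↦ N (j + J) * (1 - Real.cos ((√(N (j + J)))⁻¹ * X ω)))
    (fun j ↦ ((integrable_const 1).sub (integrable_cos_mul hX _)).const_mul _)
    (fun j ω ↦ mul_one_sub_cos_inv_sqrt_mul_nonneg _ _)
    (fun j ↦ (mul_one_sub_integral_cos hX _).symm.trans_le (hJ (j + J) (J.le_add_left j)).le)
    fun ω ↦ (tendsto_mul_one_sub_cos_inv_sqrt_mul (X ω)).comp
      (hN.comp (tendsto_add_atTop_nat J))).1
  simpa only [div_mul_cancel₀ _ (two_ne_zero' ℝ)] using h_half.mul_const 2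

theorem tendsto_integral_cos_pow (hX : AEStronglyMeasurable X P)
    (hX_sq : Integrable (fun ω ↦ X ω ^ 2) P) :
    Tendsto (fun n : ℕ ↦ (∫ ω, Real.cos ((√n)⁻¹ * X ω) ∂P) ^ n) atTop
      (𝓝 (Real.exp (-(∫ ω, X ω ^ 2 ∂P) / 2))) := by
  have h_lim : Tendsto (fun n : ℕ ↦ n * (1 - ∫ ω, Real.cos ((√n)⁻¹ * X ω) ∂P)) atTop
      (𝓝 (∫ ω, X ω ^ 2 / 2 ∂P)) := by
    simp only [mul_one_sub_integral_cos hX]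
    refine tendsto_integral_of_dominated_convergence (fun ω ↦ X ω ^ 2 / 2)
      (fun n ↦ ((integrable_const 1).sub (integrable_cos_mul hX _)).const_mul _ |>.1)
      (hX_sq.div_const 2) (fun n ↦ .of_forall fun ω ↦ ?_)
      (.of_forall fun ω ↦ tendsto_mul_one_sub_cos_inv_sqrt_mul (X ω))
    rw [Real.norm_of_nonneg (mul_one_sub_cos_inv_sqrt_mul_nonneg _ _)]
    exact mul_one_sub_cos_inv_sqrt_mul_le n _
  rw [integral_div] at h_lim
  have h_exp := Real.tendsto_one_add_pow_exp_of_tendsto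
    (g := fun n : ℕ ↦ (∫ ω, Real.cos ((√n)⁻¹ * X ω) ∂P) - 1)
    (t := -(∫ ω, X ω ^ 2 ∂P) / 2) (by
      rw [neg_div]
      exact h_lim.neg.congr fun n ↦ by ring)
  simpa using h_exp

end CentralLimit

section SecondMoment

variable {d : ℕ} {μ : Measure (Fin d → ℝ)}

/-- The matrix of second moments `∫ xᵢ xⱼ dμ`, without centering. -/
def secondMomentMatrix (μ : Measure (Fin d → ℝ)) : Matrix (Fin d) (Fin d) ℝ :=
  Matrix.of fun i j ↦ ∫ x, x i * x j ∂μ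

theorem isHermitian_secondMomentMatrix : (secondMomentMatrix μ).IsHermitian := by
  ext i j
  simp [secondMomentMatrix, mul_comm]

theorem integrable_mul_of_integrable_sq_dotProduct
    (h_sq : ∀ c : Fin d → ℝ, Integrable (fun x ↦ (c ⬝ᵥ x) ^ 2) μ) (i j : Fin d) :
    Integrable (fun x ↦ x i * x j) μ := by
  have h_polar := ((h_sq (Pi.single i 1 + Pi.single j 1)).sub
    (h_sq (Pi.single i 1 - Pi.single j 1))).div_const 4
  refine h_polar.congr (.of_forall fun x ↦ ?_)
  simp only [Pi.sub_apply, add_dotProduct, sub_dotProduct, single_dotProduct, one_mul]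
  ring

theorem dotProduct_secondMomentMatrix_mulVec
    (h_sq : ∀ c : Fin d → ℝ, Integrable (fun x ↦ (c ⬝ᵥ x) ^ 2) μ) (c : Fin d → ℝ) :
    c ⬝ᵥ secondMomentMatrix μ *ᵥ c = ∫ x, (c ⬝ᵥ x) ^ 2 ∂μ := by
  have h_int (i j) : Integrable (fun x ↦ c i * c j * (x i * x j)) μ :=
    (integrable_mul_of_integrable_sq_dotProduct h_sq i j).const_mul _
  have h_expand (x) : (c ⬝ᵥ x) ^ 2 = ∑ i, ∑ j, c i * c j * (x i * x j) := by
    rw [pow_two, dotProduct, Finset.sum_mul_sum]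
    exact Finset.sum_congr rfl fun i _ ↦ Finset.sum_congr rfl fun j _ ↦ by ring
  simp only [h_expand]
  rw [integral_finsetSum _ fun i _ ↦ integrable_finsetSum _ fun j _ ↦ h_int i j]
  simp only [integral_finsetSum _ fun j _ ↦ h_int _ j, integral_const_mul, dotProduct, mulVec,
    Finset.mul_sum, secondMomentMatrix, of_apply]
  exact Finset.sum_congr rfl fun i _ ↦ Finset.sum_congr rfl fun j _ ↦ by ring

theorem volume_setOf_dotProduct_eq_zero {c : Fin d → ℝ} (hc : c ≠ 0) :
    volume {x : Fin d → ℝ | c ⬝ᵥ x = 0} = 0 := by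
  refine Measure.addHaar_submodule volume (LinearMap.ker (dotProductBilin ℝ ℝ c)) fun h_top ↦ hc ?_
  have h_mem : c ∈ LinearMap.ker (dotProductBilin ℝ ℝ c) := h_top ▸ Submodule.mem_top
  exact dotProduct_self_eq_zero.1 h_mem

theorem posDef_secondMomentMatrix [NeZero μ] (hμ : μ ≪ volume)
    (h_sq : ∀ c : Fin d → ℝ, Integrable (fun x ↦ (c ⬝ᵥ x) ^ 2) μ) :
    (secondMomentMatrix μ).PosDef := by
  refine .of_dotProduct_mulVec_pos isHermitian_secondMomentMatrix fun {c} hc ↦ ?_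
  rw [star_trivial, dotProduct_secondMomentMatrix_mulVec h_sq,
    integral_pos_iff_support_of_nonneg (fun _ ↦ sq_nonneg _) (h_sq c)]
  have h_null : μ (Function.support fun x ↦ (c ⬝ᵥ x) ^ 2)ᶜ = 0 := by
    convert hμ (volume_setOf_dotProduct_eq_zero hc) using 2
    ext x
    simp
  rw [pos_iff_ne_zero, measure_of_measure_compl_eq_zero h_null]
  exact NeZero.ne _

end SecondMoment

section GaussianLimit

section Measure

variable {d : ℕ} {P : Measure (Fin d → ℝ)} [IsProbabilityMeasure P] {N : ℕ → ℕ}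
  {ψ : (Fin d → ℝ) → ℝ}

theorem integrable_sq_dotProduct_of_tendsto (hN : Tendsto N atTop atTop) (hψ : ContinuousAt ψ 0)
    (hψ_pos : 0 < ψ 0)
    (h_lim : ∀ c, Tendsto (fun j ↦ (∫ x, Real.cos ((√(N j))⁻¹ * (c ⬝ᵥ x)) ∂P) ^ N j) atTop
      (𝓝 (ψ c))) (c : Fin d → ℝ) : Integrable (fun x ↦ (c ⬝ᵥ x) ^ 2) P := by
  have h_ev : ∀ᶠ t : ℝ in 𝓝[>] 0, 0 < ψ (t • c) := by
    have h_smul : Tendsto (fun t : ℝ ↦ t • c) (𝓝 0) (𝓝 0) := by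
      simpa using (tendsto_id (x := 𝓝 (0 : ℝ))).smul_const c
    exact nhdsWithin_le_nhds (h_smul.eventually (hψ.eventually (lt_mem_nhds hψ_pos)))
  obtain ⟨t, h_pos, ht⟩ := (h_ev.and self_mem_nhdsWithin).exists
  have ht_ne : t ≠ 0 := ne_of_gt ht
  have h_int := integrable_sq_of_tendsto_integral_cos_pow (X := fun x ↦ (t • c) ⬝ᵥ x)
    (by fun_prop) hN h_pos (h_lim (t • c))
  refine (h_int.const_mul (t ^ 2)⁻¹).congr (.of_forall fun x ↦ ?_)
  simp only [smul_dotProduct, smul_eq_mul]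
  field_simp

theorem eq_exp_secondMomentMatrix_of_tendsto (hN : Tendsto N atTop atTop)
    (h_sq : ∀ c : Fin d → ℝ, Integrable (fun x ↦ (c ⬝ᵥ x) ^ 2) P) {c : Fin d → ℝ} {y : ℝ}
    (h_lim : Tendsto (fun j ↦ (∫ x, Real.cos ((√(N j))⁻¹ * (c ⬝ᵥ x)) ∂P) ^ N j) atTop (𝓝 y)) :
    y = Real.exp (-(c ⬝ᵥ secondMomentMatrix P *ᵥ c) / 2) := by
  rw [dotProduct_secondMomentMatrix_mulVec h_sq]
  exact tendsto_nhds_unique h_lim ((tendsto_integral_cos_pow (by fun_prop) (h_sq c)).comp hN)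

end Measure

variable {d : ℕ} {f g : (Fin d → ℝ) → ℝ}

theorem charDensity_gaussFn {B : Matrix (Fin d) (Fin d) ℝ} (hB : B.PosDef) (c : Fin d → ℝ) :
    charDensity (fun x ↦ √B.det * gaussFn B x) c =
      (Real.exp (-(c ⬝ᵥ B⁻¹ *ᵥ c) / (4 * Real.pi)) : ℝ) := by
  have h_det : (√B.det : ℂ) ≠ 0 := by exact_mod_cast (Real.sqrt_pos.2 hB.det_pos).ne'
  simp only [charDensity, Complex.ofReal_mul, mul_assoc, integral_const_mul,
    integral_gaussFn_mul_cexp hB]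
  rw [Complex.ofReal_inv, mul_inv_cancel_left₀ h_det, Complex.ofReal_exp]

theorem charDensity_zero : charDensity f 0 = (∫ x, f x : ℝ) := by
  simp [charDensity, integral_complex_ofReal]

theorem continuous_charDensity (hf : Integrable f) : Continuous (charDensity f) := by
  refine continuous_of_dominated (fun c ↦ (integrable_mul_cexp hf c).aestronglyMeasurable)
    (bound := fun x ↦ ‖f x‖) (fun c ↦ .of_forall fun x ↦ ?_) hf.norm
    (.of_forall fun x ↦ by fun_prop)
  rw [norm_mul, Complex.norm_exp_ofReal_mul_I, mul_one, Complex.norm_real]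

theorem charDensity_selfCirc_iterate_of_even (hf : Integrable f) (hf_nonneg : 0 ≤ f)
    (hf_even : f.Even) (k : ℕ) (c : Fin d → ℝ) :
    charDensity (selfCirc^[k] f) c = ((∫ x, Real.cos ((√(2 ^ k : ℕ))⁻¹ * (c ⬝ᵥ x))
      ∂volume.withDensity fun x ↦ ENNReal.ofReal (f x)) ^ 2 ^ k : ℝ) := by
  have h_sqrt : √(2 ^ k : ℕ) = √2 ^ k := by
    rw [Real.sqrt_eq_iff_mul_self_eq (by positivity) (by positivity), ← mul_pow,
      Real.mul_self_sqrt zero_le_two, Nat.cast_pow, Nat.cast_ofNat]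
  rw [charDensity_selfCirc_iterate hf, charDensity_of_even hf hf_even, Complex.ofReal_pow, h_sqrt,
    ← inv_pow, integral_withDensity_ofReal hf.aemeasurable hf_nonneg]
  simp only [smul_dotProduct, smul_eq_mul]

theorem exists_tendsto_integral_cos_pow_of_tendsto_selfCirc (hf : Integrable f) (hf_nonneg : 0 ≤ f)
    (hf_even : f.Even) (hg : Integrable g) {φ : ℕ → ℕ}
    (h_lim : Tendsto (fun j ↦ ∫ x, |selfCirc^[φ j] f x - g x|) atTop (𝓝 0)) (c : Fin d → ℝ) :
    ∃ y : ℝ, charDensity g c = y ∧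
      Tendsto (fun j ↦ (∫ x, Real.cos ((√(2 ^ φ j : ℕ))⁻¹ * (c ⬝ᵥ x))
        ∂volume.withDensity fun x ↦ ENNReal.ofReal (f x)) ^ 2 ^ φ j) atTop (𝓝 y) := by
  have h_complex :=
    tendsto_charDensity (fun j ↦ integrable_selfCirc_iterate hf (φ j)) hg h_lim c
  simp only [charDensity_selfCirc_iterate_of_even hf hf_nonneg hf_even] at h_complex
  have h_real := (Complex.continuous_re.tendsto _).comp h_complex
  exact ⟨_, tendsto_nhds_unique h_complex ((Complex.continuous_ofReal.tendsto _).comp h_real),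
    h_real⟩

theorem exists_ae_eq_gaussFn_of_tendsto_selfCirc (hf : Integrable f) (hf_nonneg : 0 ≤ f)
    (hf_one : ∫ x, f x = 1) (hf_even : f.Even) (hg : Integrable g) (hg_nonneg : 0 ≤ g)
    (hg_one : ∫ x, g x = 1) {φ : ℕ → ℕ} (hφ : Tendsto φ atTop atTop)
    (h_lim : Tendsto (fun j ↦ ∫ x, |selfCirc^[φ j] f x - g x|) atTop (𝓝 0)) :
    ∃ B : Matrix (Fin d) (Fin d) ℝ, B.PosDef ∧ g =ᵐ[volume] fun x ↦ √B.det * gaussFn B x := by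
  have := isProbabilityMeasure_withDensity_ofReal hf hf_nonneg hf_one
  have hN : Tendsto (fun j ↦ 2 ^ φ j) atTop atTop :=
    (tendsto_pow_atTop_atTop_of_one_lt one_lt_two).comp hφ
  choose ψ h_char h_cos using
    exists_tendsto_integral_cos_pow_of_tendsto_selfCirc hf hf_nonneg hf_even hg h_lim
  set P : Measure (Fin d → ℝ) := volume.withDensity fun x ↦ ENNReal.ofReal (f x)
  have hψ (c) : ψ c = (charDensity g c).re := by rw [h_char, Complex.ofReal_re]
  have hψ_cont : Continuous ψ :=
    (Complex.continuous_re.comp (continuous_charDensity hg)).congr fun c ↦ (hψ c).symm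
  have hψ_zero : ψ 0 = 1 := by rw [hψ, charDensity_zero, hg_one, Complex.ofReal_re]
  have h_sq := integrable_sq_dotProduct_of_tendsto hN hψ_cont.continuousAt
    (hψ_zero ▸ one_pos) h_cos
  have hS : ((2 * Real.pi) • secondMomentMatrix P).PosDef :=
    (posDef_secondMomentMatrix (withDensity_absolutelyContinuous _ _) h_sq).smul (by positivity)
  refine ⟨_, hS.inv, ae_eq_of_charDensity_eq hg ((integrable_gaussFn hS.inv).const_mul _) hg_nonneg
    (fun x ↦ mul_nonneg (Real.sqrt_nonneg _) (gaussFn_pos _ _).le) (funext fun c ↦ ?_)⟩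
  rw [h_char, eq_exp_secondMomentMatrix_of_tendsto hN h_sq (h_cos c), charDensity_gaussFn hS.inv,
    nonsing_inv_nonsing_inv _ ((isUnit_iff_isUnit_det _).1 hS.isUnit), smul_mulVec,
    dotProduct_smul, smul_eq_mul]
  congr 2
  field_simp
  norm_num

end GaussianLimit

/-! ### Gaussian extremizers -/

section GaussianExtremizers

section Comparison

variable {k : ℕ} {R Q B : Matrix (Fin k) (Fin k) ℝ}

theorem gaussFn_zero (Q : Matrix (Fin k) (Fin k) ℝ) : gaussFn Q 0 = 1 := by
  simp [gaussFn]

theorem gaussFn_le_gaussFn_iff {x : Fin k → ℝ} :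
    gaussFn R x ≤ gaussFn B x ↔ B *ᵥ x ⬝ᵥ x ≤ R *ᵥ x ⬝ᵥ x := by
  rw [gaussFn, gaussFn, Real.exp_le_exp, neg_mul, neg_mul, neg_le_neg_iff,
    mul_le_mul_iff_right₀ Real.pi_pos]

theorem posSemidef_sub_iff_gaussFn_le (hR : R.IsHermitian) (hB : B.IsHermitian) :
    (R - B).PosSemidef ↔ ∀ x, gaussFn R x ≤ gaussFn B x := by
  rw [posSemidef_iff_dotProduct_mulVec]
  simp only [hR.sub hB, true_and, star_trivial, gaussFn_le_gaussFn_iff, sub_mulVec, dotProduct_sub,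
    sub_nonneg]
  simp only [dotProduct_comm]

theorem MoreLogConvex.posSemidef_sub {a : ℝ} (ha : 0 < a) (hR : R.IsHermitian)
    (hB : B.IsHermitian) (h : MoreLogConvex (fun x ↦ a * gaussFn B x) R) :
    (R - B).PosSemidef := by
  refine (posSemidef_sub_iff_gaussFn_le hR hB).2 fun w ↦ le_of_mul_le_mul_left ?_ ha
  simpa only [gaussFn_zero, zero_add, zero_sub, gaussFn_neg, add_self_div_two, mul_one] using
    h.mul_gaussFn_le 0 w

theorem LogConcaveFun.le_apply_zero_of_even {h : (Fin k → ℝ) → ℝ} (hh : LogConcaveFun h)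
    (h_even : h.Even) (x : Fin k → ℝ) : h x ≤ h 0 := by
  have h_mid := hh.2 x (-x) 2⁻¹ 2⁻¹ (by positivity) (by positivity) (by norm_num)
  rw [h_even, ← Real.rpow_add_of_nonneg (hh.1 x) (by positivity) (by positivity), smul_neg,
    add_neg_cancel] at h_mid
  norm_num at h_mid
  exact h_mid

theorem MoreLogConcave.posSemidef_sub {a : ℝ} (ha : 0 < a) (hQ : Q.IsHermitian)
    (hB : B.IsHermitian) (h : MoreLogConcave (fun x ↦ a * gaussFn B x) Q) :
    (B - Q).PosSemidef := by
  refine (posSemidef_sub_iff_gaussFn_le hB hQ).2 fun w ↦ le_of_mul_le_mul_left ?_ ha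
  have h_le := (moreLogConcave_iff.1 h).le_apply_zero_of_even
    (fun x ↦ by simp only [gaussFn_neg]) w
  rwa [gaussFn_zero, gaussFn_zero, div_one, mul_one, div_le_iff₀ (gaussFn_pos Q w)] at h_le

theorem det_le_det_add_of_posDef (hB : B.PosDef) (hQ : Q.PosSemidef) :
    B.det ≤ (B + Q).det := by
  have h_add := hB.add_posSemidef hQ
  have h_le (x) : gaussFn (B + Q) x ≤ gaussFn B x := by
    refine (posSemidef_sub_iff_gaussFn_le h_add.isHermitian hB.isHermitian).1 ?_ x
    rwa [add_sub_cancel_left]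
  have h_int := integral_mono (integrable_gaussFn h_add) (integrable_gaussFn hB) h_le
  rw [integral_gaussFn h_add, integral_gaussFn hB, inv_le_inv₀ (Real.sqrt_pos.2 h_add.det_pos)
    (Real.sqrt_pos.2 hB.det_pos)] at h_int
  exact (Real.sqrt_le_sqrt_iff h_add.det_pos.le).1 h_int

theorem det_le_det_add_of_posSemidef (hB : B.PosSemidef) (hQ : Q.PosSemidef) :
    B.det ≤ (B + Q).det := by
  by_cases h_det : B.det = 0
  · exact h_det.trans_le (hB.add hQ).det_nonneg
  · exact det_le_det_add_of_posDef (hB.posDef_iff_det_ne_zero.2 h_det) hQ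

end Comparison

variable {ι : Type*} [Fintype ι] {n : ℕ} {d : ι → ℕ} {C : ∀ i, Matrix (Fin (d i)) (Fin n) ℝ}
  {p : ι → ℝ} {𝒬 : Matrix (Fin n) (Fin n) ℝ} {R Q B : ∀ i, Matrix (Fin (d i)) (Fin (d i)) ℝ}
  {b : ι → Prop} {f : ∀ i, (Fin (d i) → ℝ) → ℝ}

theorem posSemidef_sum_smul_conj (hp : ∀ i, 0 ≤ p i) (hB : ∀ i, (B i).PosSemidef) :
    (∑ i, p i • ((C i)ᵀ * B i * C i)).PosSemidef := by
  refine posSemidef_sum _ fun i _ ↦ ?_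
  simpa only [conjTranspose_eq_transpose_of_trivial] using
    ((hB i).conjTranspose_mul_mul_same (C i)).smul (hp i)

/-- The value `(∏ᵢ det(Bᵢ)^{pᵢ} / det(𝒬 + ∑ᵢ pᵢ CᵢᵀBᵢCᵢ))^{1/2}` of the Brascamp–Lieb functional at
the normalized Gaussians `√det(Bᵢ) g_{Bᵢ}`. It is `∞` where the denominator vanishes. -/
def gaussConst (C : ∀ i, Matrix (Fin (d i)) (Fin n) ℝ) (p : ι → ℝ) (𝒬 : Matrix (Fin n) (Fin n) ℝ)
    (B : ∀ i, Matrix (Fin (d i)) (Fin (d i)) ℝ) : ℝ≥0∞ :=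
  ((∏ i, ENNReal.ofReal (B i).det ^ p i) /
    ENNReal.ofReal (𝒬 + ∑ i, p i • ((C i)ᵀ * B i * C i)).det) ^ (2⁻¹ : ℝ)

theorem gaussConst_add_le (hp : ∀ i, 0 ≤ p i) (h𝒬 : 𝒬.PosSemidef) {E : Matrix (Fin n) (Fin n) ℝ}
    (hE : E.PosSemidef) (hB : ∀ i, (B i).PosSemidef) :
    gaussConst C p (𝒬 + E) B ≤ gaussConst C p 𝒬 B := by
  refine ENNReal.rpow_le_rpow (ENNReal.div_le_div_left (ENNReal.ofReal_le_ofReal ?_) _)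
    (by positivity)
  rw [add_right_comm]
  exact det_le_det_add_of_posSemidef (h𝒬.add (posSemidef_sum_smul_conj hp hB)) hE

theorem blIntegrand_gaussFn (x : Fin n → ℝ) : blIntegrand C p 𝒬 (fun i ↦ gaussFn (B i)) x =
    gaussFn (𝒬 + ∑ i, p i • ((C i)ᵀ * B i * C i)) x := by
  have h_conj (i) : ((C i)ᵀ * B i * C i) *ᵥ x ⬝ᵥ x = B i *ᵥ C i *ᵥ x ⬝ᵥ C i *ᵥ x := by
    rw [← mulVec_mulVec, ← mulVec_mulVec, mulVec_transpose, ← dotProduct_mulVec]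
  simp only [blIntegrand, gaussFn, ← Real.exp_mul, ← Real.exp_sum, ← Real.exp_add, add_mulVec,
    add_dotProduct, sum_mulVec, sum_dotProduct, smul_mulVec, smul_dotProduct, smul_eq_mul, h_conj,
    mul_add, Finset.mul_sum]
  congr 2
  exact Finset.sum_congr rfl fun i _ ↦ by ring

theorem blIntegral_gaussFn (hp : ∀ i, 0 ≤ p i) (h𝒬 : 𝒬.PosDef) (hB : ∀ i, (B i).PosDef) :
    blIntegral C p 𝒬 (fun i x ↦ √(B i).det * gaussFn (B i) x) = gaussConst C p 𝒬 B := by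
  have h_sqrt (i) : ENNReal.ofReal √(B i).det ^ p i =
      (ENNReal.ofReal (B i).det ^ p i) ^ (2⁻¹ : ℝ) := by
    rw [Real.sqrt_eq_rpow, ← ENNReal.ofReal_rpow_of_pos (hB i).det_pos, ← ENNReal.rpow_mul,
      ← ENNReal.rpow_mul, one_div, mul_comm]
  rw [blIntegral_const_mul hp (fun i x ↦ (gaussFn_pos _ x).le) fun i ↦ Real.sqrt_nonneg _,
    blIntegral]
  simp only [blIntegrand_gaussFn, h_sqrt]
  rw [lintegral_gaussFn (h𝒬.add_posSemidef
    (posSemidef_sum_smul_conj hp fun i ↦ (hB i).posSemidef)),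
    ENNReal.prod_rpow_of_nonneg (by positivity), gaussConst, div_eq_mul_inv,
    ENNReal.mul_rpow_of_nonneg _ _ (by positivity), mul_comm]

theorem even_circ_comp_neg {k : ℕ} (f : (Fin k → ℝ) → ℝ) : (circ f fun x ↦ f (-x)).Even := by
  refine fun z ↦ integral_congr_ae (.of_forall fun w ↦ ?_)
  have h_add : -z + w = -(z - w) := by abel
  have h_sub : -z - w = -(z + w) := by abel
  simp only [rotMul, h_add, h_sub, smul_neg, neg_neg]
  exact mul_comm _ _

theorem IsExtremizer.selfCirc_iterate (hp : ∀ i, 0 < p i) (h𝒬 : 𝒬.PosDef)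
    (hR : ∀ i, (R i).PosDef) (hQ : ∀ i, (Q i).PosSemidef) (h_zero : blSup C p 𝒬 R Q b ≠ 0)
    (hf : IsExtremizer C p 𝒬 R Q b f) (k : ℕ) :
    IsExtremizer C p 𝒬 R Q b fun i ↦ selfCirc^[k] (f i) := by
  induction k with
  | zero => exact hf
  | succ k ih =>
    simp only [Function.iterate_succ_apply']
    exact ih.circ hp h𝒬 hR hQ h_zero ih

theorem exists_isExtremizer_gaussFn (hp : ∀ i, 0 < p i) (h𝒬 : 𝒬.PosDef) (hR : ∀ i, (R i).PosDef)
    (hQ : ∀ i, (Q i).PosSemidef) (h_zero : blSup C p 𝒬 R Q b ≠ 0) :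
    ∃ B : ∀ i, Matrix (Fin (d i)) (Fin (d i)) ℝ, (∀ i, (B i).PosDef) ∧
      IsExtremizer C p 𝒬 R Q b fun i x ↦ √(B i).det * gaussFn (B i) x := by
  obtain ⟨f, hf⟩ := exists_isExtremizer (C := C) (Q := Q) (b := b) hp h𝒬 hR h_zero
  have h_even (i) := even_circ_comp_neg (f i)
  have hf_circ := hf.circ hp h𝒬 hR hQ h_zero hf.comp_neg
  set F : ∀ i, (Fin (d i) → ℝ) → ℝ := fun i ↦ circ (f i) fun x ↦ f i (-x)
  have hF := hf_circ.selfCirc_iterate hp h𝒬 hR hQ h_zero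
  obtain ⟨φ, g, hφ, h_lim, hg⟩ := exists_subseq_tendsto_isExtremizer hp h𝒬 hR h_zero
    (fun k ↦ (hF k).normalized) (by simp only [(hF _).blIntegral_eq, tendsto_const_nhds])
  have h_gauss (i) : ∃ B : Matrix (Fin (d i)) (Fin (d i)) ℝ, B.PosDef ∧
      g i =ᵐ[volume] fun x ↦ √B.det * gaussFn B x := by
    obtain ⟨hF_i, hF_one⟩ := hf_circ.normalized i
    obtain ⟨hg_i, hg_one⟩ := hg.normalized i
    refine exists_ae_eq_gaussFn_of_tendsto_selfCirc hF_i.integrable hF_i.nonneg hF_one (h_even i)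
      hg_i.integrable hg_i.nonneg hg_one hφ.tendsto_atTop ?_
    refine tendsto_integral_abs_sub (fun j ↦ ((hF (φ j)).normalized i).1.integrable)
      hg_i.integrable (fun j ↦ .of_forall ((hF (φ j)).normalized i).1.nonneg) ?_
      (.of_forall (h_lim i))
    simp only [((hF _).normalized i).2, hg_one, tendsto_const_nhds]
  choose B hB hgB using h_gauss
  have hg_eq : g = fun i x ↦ √(B i).det * gaussFn (B i) x := funext fun i ↦
    ((hg.normalized i).1.continuous.ae_eq_iff_eq _ ((continuous_gaussFn _).const_mul _)).1 (hgB i)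
  exact ⟨B, hB, hg_eq ▸ hg⟩

theorem blSup_le_iSup_gaussConst (hp : ∀ i, 0 < p i) (h𝒬 : 𝒬.PosDef) (hR : ∀ i, (R i).PosDef)
    (hQ : ∀ i, (Q i).PosSemidef) : blSup C p 𝒬 R Q b ≤
      ⨆ (B : ∀ i, Matrix (Fin (d i)) (Fin (d i)) ℝ) (_ : (∀ i, (B i).PosDef) ∧
        (∀ i, (R i - B i).PosSemidef) ∧ ∀ i, b i → (B i - Q i).PosSemidef),
          gaussConst C p 𝒬 B := by
  by_cases h_zero : blSup C p 𝒬 R Q b = 0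
  · exact h_zero.trans_le zero_le
  obtain ⟨B, hB, h_ext⟩ := exists_isExtremizer_gaussFn hp h𝒬 hR hQ h_zero
  have h_pos (i) : 0 < √(B i).det := Real.sqrt_pos.2 (hB i).det_pos
  rw [← h_ext.blIntegral_eq, blIntegral_gaussFn (fun i ↦ (hp i).le) h𝒬 hB]
  exact le_iSup₂_of_le B ⟨hB,
    fun i ↦ (h_ext.normalized i).1.convex.posSemidef_sub (h_pos i) (hR i).isHermitian
      (hB i).isHermitian,
    fun i hi ↦ ((h_ext.normalized i).1.concave hi).posSemidef_sub (h_pos i) (hQ i).isHermitian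
      (hB i).isHermitian⟩ le_rfl

end GaussianExtremizers

/-! ### Approximation by Gaussian smoothing -/

namespace LogConcaveFun

variable {k : ℕ} {h : (Fin k → ℝ) → ℝ}

theorem concaveOn_log (hh : LogConcaveFun h) :
    ConcaveOn ℝ {x | 0 < h x} fun x ↦ Real.log (h x) := by
  have h_pos {x y : Fin k → ℝ} {a b : ℝ} (hx : 0 < h x) (hy : 0 < h y) :
      0 < h x ^ a * h y ^ b := mul_pos (Real.rpow_pos_of_pos hx a) (Real.rpow_pos_of_pos hy b)
  refine ⟨fun x hx y hy a b ha hb hab ↦ (h_pos hx hy).trans_le (hh.2 x y a b ha hb hab),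
    fun x hx y hy a b ha hb hab ↦ ?_⟩
  have h_log := Real.log_le_log (h_pos hx hy) (hh.2 x y a b ha hb hab)
  rwa [Real.log_mul (Real.rpow_pos_of_pos hx _).ne' (Real.rpow_pos_of_pos hy _).ne',
    Real.log_rpow hx, Real.log_rpow hy] at h_log

theorem continuousOn_interior (hh : LogConcaveFun h) :
    ContinuousOn h (interior {x | 0 < h x}) :=
  hh.concaveOn_log.continuousOn_interior.rexp.congr
    fun _ hx ↦ (Real.exp_log (interior_subset (s := {x | 0 < h x}) hx)).symm

theorem indicator_interior (hh : LogConcaveFun h) :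
    LogConcaveFun ((interior {x | 0 < h x}).indicator h) := by
  have h_nonneg (x) : 0 ≤ (interior {x | 0 < h x}).indicator h x :=
    Set.indicator_nonneg (fun x _ ↦ hh.1 x) x
  refine ⟨h_nonneg, fun x y a b ha hb hab ↦ ?_⟩
  rcases ha.eq_or_lt with rfl | ha'
  · obtain rfl : b = 1 := by linarith
    simp
  rcases hb.eq_or_lt with rfl | hb'
  · obtain rfl : a = 1 := by linarith
    simp
  by_cases hx : x ∈ interior {x | 0 < h x}
  · by_cases hy : y ∈ interior {x | 0 < h x}
    · rw [Set.indicator_of_mem hx, Set.indicator_of_mem hy,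
        Set.indicator_of_mem (hh.concaveOn_log.1.interior hx hy ha hb hab)]
      exact hh.2 x y a b ha hb hab
    · rw [Set.indicator_of_notMem hy, Real.zero_rpow hb'.ne', mul_zero]
      exact h_nonneg _
  · rw [Set.indicator_of_notMem hx, Real.zero_rpow ha'.ne', zero_mul]
    exact h_nonneg _

theorem measurable_indicator_interior (hh : LogConcaveFun h) :
    Measurable ((interior {x | 0 < h x}).indicator h) := by
  classical
  rw [← Set.piecewise_eq_indicator]
  exact hh.continuousOn_interior.measurable_piecewise continuousOn_const
    isOpen_interior.measurableSet

theorem indicator_interior_eq_zero_or_continuousAt (hh : LogConcaveFun h) (x : Fin k → ℝ) :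
    (interior {x | 0 < h x}).indicator h x = 0 ∨
      ContinuousAt ((interior {x | 0 < h x}).indicator h) x := by
  by_cases hx : x ∈ interior {x | 0 < h x}
  · have h_nhds := isOpen_interior.mem_nhds hx
    refine .inr ((hh.continuousOn_interior.continuousAt h_nhds).congr ?_)
    filter_upwards [h_nhds] with y hy using (Set.indicator_of_mem hy h).symm
  · exact .inl (Set.indicator_of_notMem hx h)

theorem indicator_interior_ae_eq (hh : LogConcaveFun h) :
    (interior {x | 0 < h x}).indicator h =ᵐ[volume] h := by
  filter_upwards [measure_eq_zero_iff_ae_notMem.1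
    (hh.concaveOn_log.1.addHaar_frontier volume)] with x hx
  by_cases hx_int : x ∈ interior {x | 0 < h x}
  · exact Set.indicator_of_mem hx_int h
  · rw [Set.indicator_of_notMem hx_int]
    exact le_antisymm (hh.1 x) (not_lt.1 fun h_pos ↦ hx ⟨subset_closure h_pos, hx_int⟩)

end LogConcaveFun

section Smoothing

variable {k : ℕ} {f h : (Fin k → ℝ) → ℝ} {R Q : Matrix (Fin k) (Fin k) ℝ} {c s : ℝ}

/-- Gaussian smoothing: the density of `c X + Z` if `X` has density `f` and `Z` is independent of
`X` with density `√(det R) g_R`. -/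
def gaussSmoothing (R : Matrix (Fin k) (Fin k) ℝ) (c : ℝ) (f : (Fin k → ℝ) → ℝ)
    (x : Fin k → ℝ) : ℝ :=
  √R.det * ∫ y, f y * gaussFn R (x - c • y)

theorem integrable_mul_gaussFn_comp (hf : Integrable f) (hR : R.PosSemidef)
    {φ : (Fin k → ℝ) → Fin k → ℝ} (hφ : Continuous φ) :
    Integrable fun y ↦ f y * gaussFn R (φ y) :=
  hf.mul_bdd (c := 1) ((continuous_gaussFn R).comp hφ).aestronglyMeasurable
    (.of_forall fun y ↦ by
      rw [Real.norm_of_nonneg (gaussFn_pos _ _).le]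
      exact gaussFn_le_one hR _)

theorem integrable_prod_mul_gaussFn_sub (hf : Integrable f) (hR : R.PosDef) (c : ℝ) :
    Integrable fun q : (Fin k → ℝ) × (Fin k → ℝ) ↦ f q.2 * gaussFn R (q.1 - c • q.2) := by
  have h_meas : AEStronglyMeasurable (fun q : (Fin k → ℝ) × (Fin k → ℝ) ↦
      f q.2 * gaussFn R (q.1 - c • q.2)) (volume.prod volume) :=
    hf.aestronglyMeasurable.comp_snd.mul
      ((continuous_gaussFn R).comp (by fun_prop)).aestronglyMeasurable
  refine (integrable_prod_iff' h_meas).2 ⟨.of_forall fun y ↦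
    ((integrable_gaussFn hR).comp_sub_right (c • y)).const_mul (f y), ?_⟩
  simp only [norm_mul, integral_const_mul, Real.norm_of_nonneg (gaussFn_pos _ _).le,
    integral_sub_right_eq_self (gaussFn R)]
  exact hf.norm.mul_const _

theorem integrable_gaussSmoothing (hf : Integrable f) (hR : R.PosDef) :
    Integrable (gaussSmoothing R c f) :=
  (integrable_prod_mul_gaussFn_sub hf hR c).integral_prod_left.const_mul _

theorem integral_gaussSmoothing (hf : Integrable f) (hR : R.PosDef) :
    ∫ x, gaussSmoothing R c f x = ∫ x, f x := by
  simp only [gaussSmoothing, integral_const_mul]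
  rw [integral_integral_swap (integrable_prod_mul_gaussFn_sub hf hR c)]
  simp only [integral_const_mul, integral_sub_right_eq_self (gaussFn R), integral_gaussFn hR,
    integral_mul_const]
  rw [mul_comm, mul_assoc, inv_mul_cancel₀ (Real.sqrt_pos.2 hR.det_pos).ne', mul_one]

theorem logConvexFun_gaussFn_sub_div_gaussFn (R : Matrix (Fin k) (Fin k) ℝ) (v : Fin k → ℝ) :
    LogConvexFun fun x ↦ gaussFn R (x - v) / gaussFn R x := by
  refine ⟨fun x ↦ (div_pos (gaussFn_pos R _) (gaussFn_pos R _)).le,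
    fun x y a b _ _ hab ↦ le_of_eq ?_⟩
  obtain rfl : b = 1 - a := by linarith
  simp only [gaussFn, ← Real.exp_sub, ← Real.exp_mul, ← Real.exp_add, mulVec_sub, mulVec_add,
    mulVec_smul, sub_dotProduct, dotProduct_sub, add_dotProduct, dotProduct_add, smul_dotProduct,
    dotProduct_smul, smul_eq_mul]
  congr 1
  ring

theorem moreLogConvex_gaussSmoothing (hf : Integrable f) (hf_nonneg : ∀ x, 0 ≤ f x)
    (hR : R.PosSemidef) : MoreLogConvex (gaussSmoothing R c f) R := by
  have h_int (x) : Integrable fun y ↦ f y * (gaussFn R (x - c • y) / gaussFn R x) := by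
    simp only [← mul_div_assoc]
    exact (integrable_mul_gaussFn_comp hf hR (by fun_prop)).div_const _
  refine ⟨_, (LogConvexFun.const (Real.sqrt_nonneg R.det)).mul (LogConvexFun.integral
    (fun y ↦ (LogConvexFun.const (hf_nonneg y)).mul
      (logConvexFun_gaussFn_sub_div_gaussFn R (c • y))) h_int), funext fun x ↦ ?_⟩
  simp only [gaussSmoothing, ← mul_div_assoc, integral_div]
  field_simp [(gaussFn_pos R x).ne']

theorem gaussFn_smul_inv_sq (Q : Matrix (Fin k) (Fin k) ℝ) (hs : s ≠ 0) (x : Fin k → ℝ) :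
    gaussFn ((s ^ 2)⁻¹ • Q) (s • x) = gaussFn Q x := by
  simp only [gaussFn, smul_mulVec, mulVec_smul, smul_dotProduct, dotProduct_smul, smul_eq_mul]
  congr 1
  field_simp

theorem sqrt_det_inv_sq_smul (Q : Matrix (Fin k) (Fin k) ℝ) (hs : 0 < s) :
    √((s ^ 2)⁻¹ • Q).det = (s ^ k)⁻¹ * √Q.det := by
  rw [det_smul, Fintype.card_fin, Real.sqrt_mul (by positivity), inv_pow, Real.sqrt_inv, ← pow_mul,
    mul_comm 2, pow_mul, Real.sqrt_sq (by positivity)]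

-- Mehler's formula, from the substitution `y = c x + s w`.
theorem gaussSmoothing_gaussFn_mul (Q : Matrix (Fin k) (Fin k) ℝ) (h : (Fin k → ℝ) → ℝ)
    (hs : 0 < s) (hcs : c ^ 2 + s ^ 2 = 1) (x : Fin k → ℝ) :
    gaussSmoothing ((s ^ 2)⁻¹ • Q) c (fun y ↦ gaussFn Q y * h y) x =
      gaussFn Q x * (√Q.det * ∫ w, h (c • x + s • w) * gaussFn Q w) := by
  set F : (Fin k → ℝ) → ℝ := fun y ↦
    gaussFn Q y * h y * gaussFn ((s ^ 2)⁻¹ • Q) (x - c • y) with hF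
  have h_subst (w : Fin k → ℝ) :
      F (c • x + s • w) = gaussFn Q x * (h (c • x + s • w) * gaussFn Q w) := by
    have h_arg : x - c • (c • x + s • w) = s • (s • x - c • w) := by
      linear_combination (norm := module) (-hcs) • x
    simp only [hF]
    rw [h_arg, gaussFn_smul_inv_sq Q hs.ne', mul_right_comm,
      gaussFn_add_mul_gaussFn_sub_of_sq_add_sq_eq_one Q hcs]
    ring
  have h_scale := Measure.integral_comp_smul volume (fun t ↦ F (c • x + t)) s
  rw [integral_add_left_eq_self F, Module.finrank_fin_fun, abs_of_pos (by positivity),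
    smul_eq_mul] at h_scale
  simp only [h_subst, integral_const_mul] at h_scale
  rw [gaussSmoothing, sqrt_det_inv_sq_smul Q hs, mul_right_comm, ← h_scale]
  ring

theorem integrable_comp_smul_add_smul_mul_gaussFn (hf : Integrable fun y ↦ gaussFn Q y * h y)
    (hQ : Q.PosSemidef) (hs : s ≠ 0) (hcs : c ^ 2 + s ^ 2 = 1) (x : Fin k → ℝ) :
    Integrable fun w ↦ h (c • x + s • w) * gaussFn Q w := by
  have h_int := integrable_mul_gaussFn_comp ((hf.comp_add_left (c • x)).comp_smul hs) hQ
    (φ := fun w ↦ s • x - c • w) (by fun_prop)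
  refine (integrable_const_mul_iff (gaussFn_pos Q x).ne'.isUnit _).1
    (h_int.congr (.of_forall fun w ↦ ?_))
  simp only
  rw [mul_right_comm, gaussFn_add_mul_gaussFn_sub_of_sq_add_sq_eq_one Q hcs]
  ring

theorem moreLogConcave_gaussSmoothing (hh : LogConcaveFun h) (h_meas : Measurable h)
    (hf : Integrable fun y ↦ gaussFn Q y * h y) (hQ : Q.PosSemidef) (hs : 0 < s)
    (hcs : c ^ 2 + s ^ 2 = 1) :
    MoreLogConcave (gaussSmoothing ((s ^ 2)⁻¹ • Q) c fun y ↦ gaussFn Q y * h y) Q := by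
  have hG := logConcaveFun_gaussFn hQ
  refine ⟨_, (LogConcaveFun.const (Real.sqrt_nonneg Q.det)).mul (LogConcaveFun.integral
    (h := fun x w ↦ h (c • x + s • w) * gaussFn Q w) (fun x w ↦ mul_nonneg (hh.1 _) (hG.1 _))
    (fun x x' w w' a b ha hb hab ↦ ?_)
    (fun x ↦ (h_meas.comp (by fun_prop)).mul (continuous_gaussFn Q).measurable)
    (integrable_comp_smul_add_smul_mul_gaussFn hf hQ hs.ne' hcs)),
    funext (gaussSmoothing_gaussFn_mul Q h hs hcs)⟩
  have h_combo : c • (a • x + b • x') + s • (a • w + b • w') =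
      a • (c • x + s • w) + b • (c • x' + s • w') := by module
  rw [h_combo, Real.mul_rpow (hh.1 _) (hG.1 _), Real.mul_rpow (hh.1 _) (hG.1 _), mul_mul_mul_comm]
  exact mul_le_mul (hh.2 _ _ _ _ ha hb hab) (hG.2 _ _ _ _ ha hb hab)
    (mul_nonneg (Real.rpow_nonneg (hG.1 _) _) (Real.rpow_nonneg (hG.1 _) _)) (hh.1 _)

theorem ofReal_le_liminf_gaussSmoothing (hh : ∀ x, 0 ≤ h x) (h_meas : Measurable h)
    (hf : Integrable fun y ↦ gaussFn Q y * h y) (hQ : Q.PosDef) {x : Fin k → ℝ}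
    (hx : h x = 0 ∨ ContinuousAt h x) {c s : ℕ → ℝ} (hs : ∀ j, 0 < s j)
    (hcs : ∀ j, c j ^ 2 + s j ^ 2 = 1) (hc_lim : Tendsto c atTop (𝓝 1))
    (hs_lim : Tendsto s atTop (𝓝 0)) :
    ENNReal.ofReal (gaussFn Q x * h x) ≤ liminf (fun j ↦ ENNReal.ofReal
      (gaussSmoothing ((s j ^ 2)⁻¹ • Q) (c j) (fun y ↦ gaussFn Q y * h y) x)) atTop := by
  rcases hx with hx | hx
  · simp [hx]
  set a : ℝ := gaussFn Q x * √Q.det with ha_def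
  have ha : 0 ≤ a := mul_nonneg (gaussFn_pos _ _).le (Real.sqrt_nonneg _)
  have h_nonneg (y w : Fin k → ℝ) : 0 ≤ a * (h y * gaussFn Q w) :=
    mul_nonneg ha (mul_nonneg (hh _) (gaussFn_pos _ _).le)
  have h_lim (w : Fin k → ℝ) : Tendsto (fun j ↦ ENNReal.ofReal
      (a * (h (c j • x + s j • w) * gaussFn Q w))) atTop
      (𝓝 (ENNReal.ofReal (a * (h x * gaussFn Q w)))) := by
    have h_arg : Tendsto (fun j ↦ c j • x + s j • w) atTop (𝓝 x) := by
      simpa using (hc_lim.smul_const x).add (hs_lim.smul_const w)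
    exact (ENNReal.continuous_ofReal.tendsto _).comp
      (((hx.tendsto.comp h_arg).mul_const _).const_mul a)
  have h_left : ENNReal.ofReal (gaussFn Q x * h x) =
      ∫⁻ w, ENNReal.ofReal (a * (h x * gaussFn Q w)) := by
    rw [← ofReal_integral_eq_lintegral_ofReal (((integrable_gaussFn hQ).const_mul _).const_mul _)
      (.of_forall (h_nonneg x)), integral_const_mul, integral_const_mul, integral_gaussFn hQ,
      ha_def]
    field_simp [(Real.sqrt_pos.2 hQ.det_pos).ne']
  have h_right (j) : ENNReal.ofReal (gaussSmoothing ((s j ^ 2)⁻¹ • Q) (c j)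
      (fun y ↦ gaussFn Q y * h y) x) =
        ∫⁻ w, ENNReal.ofReal (a * (h (c j • x + s j • w) * gaussFn Q w)) := by
    have h_int := integrable_comp_smul_add_smul_mul_gaussFn hf hQ.posSemidef (hs j).ne' (hcs j) x
    rw [gaussSmoothing_gaussFn_mul Q h (hs j) (hcs j), ← mul_assoc, ← ha_def,
      ← ofReal_integral_eq_lintegral_ofReal (h_int.const_mul a) (.of_forall fun w ↦ h_nonneg _ w),
      integral_const_mul]
  simp only [h_left, h_right, ← (h_lim _).liminf_eq]
  exact lintegral_liminf_le fun j ↦ (((h_meas.comp (by fun_prop)).mul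
    (continuous_gaussFn Q).measurable).const_mul a).ennreal_ofReal

theorem MoreLogConcave.exists_seq_sandwiched (hf : MoreLogConcave f Q) (hf_int : Integrable f)
    (hQ : Q.PosDef) : ∃ (R : ℕ → Matrix (Fin k) (Fin k) ℝ) (F : ℕ → (Fin k → ℝ) → ℝ),
      (∀ j, (R j).PosDef) ∧ (∀ j, Sandwiched (R j) Q True (F j)) ∧
      (∀ j, ∫ x, F j x = ∫ x, f x) ∧
      ∀ᵐ x, ENNReal.ofReal (f x) ≤ liminf (fun j ↦ ENNReal.ofReal (F j x)) atTop := by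
  obtain ⟨h, hh, rfl⟩ := hf
  set h' := (interior {x | 0 < h x}).indicator h
  have hh' : LogConcaveFun h' := hh.indicator_interior
  have h_meas : Measurable h' := hh.measurable_indicator_interior
  have h_ae : (fun x ↦ gaussFn Q x * h' x) =ᵐ[volume] fun x ↦ gaussFn Q x * h x :=
    hh.indicator_interior_ae_eq.mono fun x hx ↦ congrArg (gaussFn Q x * ·) hx
  have h_int : Integrable fun x ↦ gaussFn Q x * h' x := hf_int.congr h_ae.symm
  have h_nonneg (x) : 0 ≤ gaussFn Q x * h' x := mul_nonneg (gaussFn_pos _ _).le (hh'.1 x)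
  let θ : ℕ → ℝ := fun j ↦ 1 / ((j : ℝ) + 1)
  let s : ℕ → ℝ := fun j ↦ Real.sin (θ j)
  let c : ℕ → ℝ := fun j ↦ Real.cos (θ j)
  have hθ : Tendsto θ atTop (𝓝 0) := tendsto_one_div_add_atTop_nhds_zero_nat
  have hs (j) : 0 < s j := Real.sin_pos_of_pos_of_le_one Nat.one_div_pos_of_nat <|
    div_le_one_of_le₀ (by simp) (by positivity)
  have hs_lim : Tendsto s atTop (𝓝 0) := by
    simpa [s, Function.comp_def] using (Real.continuous_sin.tendsto 0).comp hθ
  have hc_lim : Tendsto c atTop (𝓝 1) := by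
    simpa [c, Function.comp_def] using (Real.continuous_cos.tendsto 0).comp hθ
  have hcs (j) : c j ^ 2 + s j ^ 2 = 1 := Real.cos_sq_add_sin_sq (θ j)
  have hR (j) : ((s j ^ 2)⁻¹ • Q).PosDef := hQ.smul (inv_pos.2 (pow_pos (hs j) 2))
  refine ⟨fun j ↦ (s j ^ 2)⁻¹ • Q, fun j ↦ gaussSmoothing ((s j ^ 2)⁻¹ • Q) (c j)
    fun x ↦ gaussFn Q x * h' x, hR, fun j ↦ ?_,
    fun j ↦ (integral_gaussSmoothing h_int (hR j)).trans (integral_congr_ae h_ae), ?_⟩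
  · exact ⟨moreLogConvex_gaussSmoothing h_int h_nonneg (hR j).posSemidef,
      fun _ ↦ moreLogConcave_gaussSmoothing hh' h_meas h_int hQ.posSemidef (hs j) (hcs j),
      integrable_gaussSmoothing h_int (hR j)⟩
  · filter_upwards [h_ae] with x hx
    rw [← hx]
    exact ofReal_le_liminf_gaussSmoothing hh'.1 h_meas h_int hQ
      (hh.indicator_interior_eq_zero_or_continuousAt x) hs hcs hc_lim hs_lim

end Smoothing

/-! ### The regularized Brascamp–Lieb inequality -/

section RegularizedBrascampLieb

theorem prod_liminf_rpow_le_liminf_prod_rpow {ι : Type*} (s : Finset ι) {p : ι → ℝ}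
    (hp : ∀ i, 0 < p i) (u : ι → ℕ → ℝ≥0∞) :
    ∏ i ∈ s, liminf (u i) atTop ^ p i ≤ liminf (fun j ↦ ∏ i ∈ s, u i j ^ p i) atTop := by
  classical
  induction s using Finset.induction_on with
  | empty => simp
  | insert i s hi ih =>
    simp only [Finset.prod_insert hi]
    have h_rpow : liminf (u i) atTop ^ p i = liminf (fun j ↦ u i j ^ p i) atTop :=
      (ENNReal.orderIsoRpow (p i) (hp i)).liminf_apply
    rw [h_rpow]
    exact (mul_le_mul_right ih _).trans ENNReal.le_liminf_mul

theorem ae_mulVec_of_ae {n k : ℕ} {C : Matrix (Fin k) (Fin n) ℝ}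
    (hC : Function.Surjective C.mulVec) {P : (Fin k → ℝ) → Prop} (hP : ∀ᵐ y, P y) :
    ∀ᵐ x, P (C *ᵥ x) := by
  obtain ⟨c, -, h_map⟩ := C.mulVecLin.exists_map_addHaar_eq_smul_addHaar volume volume hC
  have h_meas : Measurable C.mulVecLin :=
    C.mulVecLin.continuous_of_finiteDimensional.measurable
  refine ae_of_ae_map h_meas.aemeasurable (p := P) ?_
  rw [h_map]
  exact Measure.ae_smul_measure hP c

theorem exists_seq_sandwiched_comp_mulVec {n k : ℕ} {C : Matrix (Fin k) (Fin n) ℝ}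
    {Q : Matrix (Fin k) (Fin k) ℝ} {f : (Fin k → ℝ) → ℝ} {b : Prop}
    (hC : b → Function.Surjective C.mulVec) (hQ : Q.PosDef) (hf_int : Integrable f)
    (hf_convex : ¬b → MoreLogConvex f Q) (hf_concave : b → MoreLogConcave f Q) :
    ∃ (R : ℕ → Matrix (Fin k) (Fin k) ℝ) (F : ℕ → (Fin k → ℝ) → ℝ),
      (∀ j, (R j).PosDef) ∧ (¬b → ∀ j, R j = Q) ∧ (∀ j, Sandwiched (R j) Q b (F j)) ∧
      (∀ j, ∫ x, F j x = ∫ x, f x) ∧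
      ∀ᵐ x, ENNReal.ofReal (f (C *ᵥ x)) ≤
        liminf (fun j ↦ ENNReal.ofReal (F j (C *ᵥ x))) atTop := by
  by_cases hb : b
  · obtain ⟨R, F, hR, hF, hF_int, h_lim⟩ := (hf_concave hb).exists_seq_sandwiched hf_int hQ
    exact ⟨R, F, hR, fun h ↦ absurd hb h,
      fun j ↦ ⟨(hF j).convex, fun _ ↦ (hF j).concave trivial, (hF j).integrable⟩, hF_int,
      ae_mulVec_of_ae (hC hb) h_lim⟩
  · exact ⟨fun _ ↦ Q, fun _ ↦ f, fun _ ↦ hQ, fun _ _ ↦ rfl,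
      fun _ ↦ ⟨hf_convex hb, fun h ↦ absurd h hb, hf_int⟩, fun _ ↦ rfl, by simp⟩

variable {ι : Type*} [Fintype ι] {n : ℕ} {d : ι → ℕ} {C : ∀ i, Matrix (Fin (d i)) (Fin n) ℝ}
  {p : ι → ℝ} {𝒬 : Matrix (Fin n) (Fin n) ℝ} {f : ∀ i, (Fin (d i) → ℝ) → ℝ}
  {R Q : ∀ i, Matrix (Fin (d i)) (Fin (d i)) ℝ} {b : ι → Prop}

theorem blIntegral_le_liminf (hp : ∀ i, 0 < p i) (hf : ∀ i x, 0 ≤ f i x)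
    {F : ℕ → ∀ i, (Fin (d i) → ℝ) → ℝ} (hF : ∀ j i x, 0 ≤ F j i x)
    (hF_cont : ∀ j i, Continuous (F j i))
    (h_lim : ∀ i, ∀ᵐ x, ENNReal.ofReal (f i (C i *ᵥ x)) ≤
      liminf (fun j ↦ ENNReal.ofReal (F j i (C i *ᵥ x))) atTop)
    {𝒬' : ℕ → Matrix (Fin n) (Fin n) ℝ} (h𝒬 : Tendsto 𝒬' atTop (𝓝 𝒬)) :
    blIntegral C p 𝒬 f ≤ liminf (fun j ↦ blIntegral C p (𝒬' j) (F j)) atTop := by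
  have hp' (i) : 0 ≤ p i := (hp i).le
  refine (lintegral_mono_ae ((ae_all_iff.2 h_lim).mono fun x hx ↦ ?_)).trans
    (lintegral_liminf_le fun j ↦
      (continuous_blIntegrand (C := C) (𝒬 := 𝒬' j) hp' (hF_cont j)).measurable.ennreal_ofReal)
  have h_gauss : Tendsto (fun j ↦ ENNReal.ofReal (gaussFn (𝒬' j) x)) atTop
      (𝓝 (ENNReal.ofReal (gaussFn 𝒬 x))) := by
    have h_cont : Continuous fun M : Matrix (Fin n) (Fin n) ℝ ↦ ENNReal.ofReal (gaussFn M x) := by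
      unfold gaussFn
      exact ENNReal.continuous_ofReal.comp (by fun_prop)
    exact (h_cont.tendsto 𝒬).comp h𝒬
  simp only [ofReal_blIntegrand hp' hf, ofReal_blIntegrand hp' (hF _)]
  calc ENNReal.ofReal (gaussFn 𝒬 x) * ∏ i, ENNReal.ofReal (f i (C i *ᵥ x)) ^ p i
      ≤ liminf (fun j ↦ ENNReal.ofReal (gaussFn (𝒬' j) x)) atTop *
          ∏ i, liminf (fun j ↦ ENNReal.ofReal (F j i (C i *ᵥ x))) atTop ^ p i := by
        rw [h_gauss.liminf_eq]
        gcongr with i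
        · exact hp' i
        · exact hx i
    _ ≤ liminf (fun j ↦ ENNReal.ofReal (gaussFn (𝒬' j) x)) atTop *
          liminf (fun j ↦ ∏ i, ENNReal.ofReal (F j i (C i *ᵥ x)) ^ p i) atTop := by
        gcongr
        exact prod_liminf_rpow_le_liminf_prod_rpow _ hp _
    _ ≤ _ := ENNReal.le_liminf_mul

theorem blIntegral_le_iSup_gaussConst_mul (hp : ∀ i, 0 < p i) (h𝒬 : 𝒬.PosDef)
    (hR : ∀ i, (R i).PosDef) (hQ : ∀ i, (Q i).PosSemidef)
    (hf : ∀ i, Sandwiched (R i) (Q i) (b i) (f i)) :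
    blIntegral C p 𝒬 f ≤
      (⨆ (B : ∀ i, Matrix (Fin (d i)) (Fin (d i)) ℝ) (_ : (∀ i, (B i).PosDef) ∧
        (∀ i, (R i - B i).PosSemidef) ∧ ∀ i, b i → (B i - Q i).PosSemidef),
          gaussConst C p 𝒬 B) * ∏ i, ENNReal.ofReal (∫ x, f i x) ^ p i := by
  refine (blIntegral_le_blSup_mul hp hR hf).trans ?_
  gcongr
  exact blSup_le_iSup_gaussConst hp h𝒬 hR hQ

theorem regularized_brascamp_lieb_forward_general (hp : ∀ i, 0 < p i) (h𝒬 : 𝒬.PosSemidef)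
    (I : Finset ι) (hC : ∀ i ∉ I, Function.Surjective (C i).mulVec) (hQ : ∀ i, (Q i).PosDef)
    (hf_int : ∀ i, Integrable (f i)) (hf_convex : ∀ i ∈ I, MoreLogConvex (f i) (Q i))
    (hf_concave : ∀ i ∉ I, MoreLogConcave (f i) (Q i)) :
    blIntegral C p 𝒬 f ≤
      (⨆ (B : ∀ i, Matrix (Fin (d i)) (Fin (d i)) ℝ) (_ : (∀ i, (B i).PosDef) ∧
        (∀ i ∈ I, (Q i - B i).PosSemidef) ∧ ∀ i ∉ I, (B i - Q i).PosSemidef),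
          gaussConst C p 𝒬 B) * ∏ i, ENNReal.ofReal (∫ x, f i x) ^ p i := by
  choose R F hR hRQ hF hF_int h_lim using fun i ↦ exists_seq_sandwiched_comp_mulVec
    (hC i) (hQ i) (hf_int i) (fun hi ↦ hf_convex i (not_not.1 hi)) (hf_concave i)
  have hf (i) (x) : 0 ≤ f i x := (em (i ∈ I)).elim (fun hi ↦ (hf_convex i hi).nonneg x)
    fun hi ↦ (hf_concave i hi).nonneg x
  let E (j : ℕ) : Matrix (Fin n) (Fin n) ℝ := (1 / ((j : ℝ) + 1)) • 1
  have hE (j) : (E j).PosDef := PosDef.one.smul Nat.one_div_pos_of_nat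
  have hE_lim : Tendsto (fun j ↦ 𝒬 + E j) atTop (𝓝 𝒬) := by
    simpa [E] using ((tendsto_one_div_add_atTop_nhds_zero_nat (𝕜 := ℝ)).smul_const
      (1 : Matrix (Fin n) (Fin n) ℝ)).const_add 𝒬
  refine (blIntegral_le_liminf hp hf (fun j i ↦ (hF i j).nonneg)
    (fun j i ↦ (hF i j).continuous) h_lim hE_lim).trans <|
    (liminf_le_liminf (.of_forall fun j ↦ ?_)).trans_eq (liminf_const _)
  refine (blIntegral_le_iSup_gaussConst_mul hp ((hE j).posSemidef_add h𝒬) (fun i ↦ hR i j)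
    (fun i ↦ (hQ i).posSemidef) fun i ↦ hF i j).trans ?_
  simp only [hF_int]
  refine mul_le_mul_left ?_ _
  exact iSup₂_le fun B hB ↦ le_iSup₂_of_le B ⟨hB.1, fun i hi ↦ hRQ i (not_not.2 hi) j ▸ hB.2.1 i,
    hB.2.2⟩ (gaussConst_add_le (fun i ↦ (hp i).le) h𝒬 (hE j).posSemidef fun i ↦ (hB.1 i).posSemidef)

end RegularizedBrascampLieb

/-- Regularized Brascamp–Lieb inequality with mixed log-convexity/log-concavity
assumptions (forward form). -/
theorem regularized_brascamp_lieb_forward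
    {n m : ℕ} (hm : 1 ≤ m) {ni : Fin m → ℕ}
    (C : ∀ i, Matrix (Fin (ni i)) (Fin n) ℝ)
    (hCsurj : ∀ i, Function.Surjective (C i).mulVec)
    (p : Fin m → ℝ) (hp : ∀ i, 0 < p i)
    (𝒬 : Matrix (Fin n) (Fin n) ℝ) (h𝒬 : 𝒬.PosSemidef)
    (I : Finset (Fin m))
    (Q : ∀ i, Matrix (Fin (ni i)) (Fin (ni i)) ℝ) (hQ : ∀ i, (Q i).PosDef)
    (f : ∀ i, (Fin (ni i) → ℝ) → ℝ)
    (hfint : ∀ i, Integrable (f i))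
    (hfI : ∀ i ∈ I, MoreLogConvex (f i) (Q i))
    (hfIc : ∀ i ∉ I, MoreLogConcave (f i) (Q i)) :
    (∫⁻ x : Fin n → ℝ, ENNReal.ofReal
        (Real.exp (-Real.pi * (𝒬.mulVec x ⬝ᵥ x)) * ∏ i, f i ((C i).mulVec x) ^ p i)) ≤
      (⨆ (B : ∀ i, Matrix (Fin (ni i)) (Fin (ni i)) ℝ)
          (_ : (∀ i, (B i).PosDef) ∧ (∀ i ∈ I, (Q i - B i).PosSemidef) ∧
               (∀ i ∉ I, (B i - Q i).PosSemidef)),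
          ((∏ i, ENNReal.ofReal ((B i).det) ^ p i) /
              ENNReal.ofReal ((𝒬 + ∑ i, p i • ((C i)ᵀ * B i * C i)).det)) ^ ((2 : ℝ)⁻¹)) *
        ∏ i, ENNReal.ofReal (∫ y, f i y) ^ p i :=
  regularized_brascamp_lieb_forward_general hp h𝒬 I (fun i _ ↦ hCsurj i) hQ hfint hfI hfIc
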